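/- arXiv:0812.2093 — 4 statements merged into one kernel-verified Lean document; each statement's English description precedes it below -/
import Mathlib

section
/- There exists a finitely generated torsion group that is not unitarizable, i.e., it admits a uniformly bounded representation on some complex Hilbert space that is not unitarizable. -/
/-- A representation of a group `G` on a complex inner product space `E`
(a homomorphism into the group of invertible continuous linear operators on `E`)
is *uniformly bounded* if the operator norms `‖π g‖` are bounded. -/
def UniformlyBoundedRep {G : Type*} [Group G] {E : Type*} [NormedAddCommGroup E]
    [InnerProductSpace ℂ E] (π : G →* (E ≃L[ℂ] E)) : Prop :=
  ∃ C : ℝ, ∀ g : G, ‖((π g : E ≃L[ℂ] E) : E →L[ℂ] E)‖ ≤ C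

/-- A representation `π` is *unitarizable* if there is a continuous linear automorphism
`S` of `E` such that `g ↦ S⁻¹ π(g) S` is a unitary operator for every `g` (being an
invertible continuous linear map, it is unitary iff it is an isometry). -/
def IsUnitarizableRep {G : Type*} [Group G] {E : Type*} [NormedAddCommGroup E]
    [InnerProductSpace ℂ E] (π : G →* (E ≃L[ℂ] E)) : Prop :=
  ∃ S : E ≃L[ℂ] E, ∀ g : G, ∀ v : E, ‖S.symm (π g (S v))‖ = ‖v‖

/-- A group `G` is *unitarizable* if every uniformly bounded representation of `G`
on every complex Hilbert space is unitarizable. -/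
def Unitarizable (G : Type*) [Group G] : Prop :=
  ∀ (E : Type) [NormedAddCommGroup E] [InnerProductSpace ℂ E] [CompleteSpace E]
    (π : G →* (E ≃L[ℂ] E)), UniformlyBoundedRep π → IsUnitarizableRep π

open scoped ENNReal

/-- In a unitarizable group, a uniformly bounded derivation `δ` relative to a contractive
representation `L` is inner. -/
theorem Unitarizable.exists_inner_derivation {G : Type*} [Group G] (hG : Unitarizable G)
    {V : Type} [NormedAddCommGroup V] [InnerProductSpace ℂ V] [CompleteSpace V]
    (L : G →* (V →L[ℂ] V)) (hL : ∀ g v, ‖L g v‖ ≤ ‖v‖)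
    (δ : G → (V →L[ℂ] V)) (hδ : ∀ g h v, δ (g * h) v = L g (δ h v) + δ g (L h v))
    {C : ℝ} (hC : 0 ≤ C) (hδC : ∀ g v, ‖δ g v‖ ≤ C * ‖v‖) :
    ∃ B : V →L[ℂ] V, ∀ g v, δ g v = L g (B v) - B (L g v) := by
  let E := WithLp 2 (V × V)
  let e : E ≃L[ℂ] V × V := WithLp.prodContinuousLinearEquiv 2 ℂ V V
  have hδ1 : ∀ v, δ 1 v = 0 := fun v => by simpa using hδ 1 1 v
  let T : G → (E →L[ℂ] E) := fun g =>
    (e.symm : V × V →L[ℂ] E) ∘L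
      ((L g ∘L .fst ℂ V V + δ g ∘L .snd ℂ V V).prod (L g ∘L .snd ℂ V V)) ∘L (e : E →L[ℂ] V × V)
  have hT : ∀ g u, T g u =
      e.symm (L g (e u).1 + δ g (e u).2, L g (e u).2) := fun g u => rfl
  let ρ : G →* (E →L[ℂ] E) :=
    { toFun := T
      map_one' := by
        ext u : 1
        rw [hT]
        simp [hδ1]
      map_mul' := fun g h => by
        ext u : 1
        rw [mul_apply_eq_comp, hT, hT, hT]
        congr 1
        ext
        · simp [hδ, add_assoc]
        · simp }
  let π : G →* (E ≃L[ℂ] E) :=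
    (ContinuousLinearEquiv.unitsEquiv ℂ E).toMonoidHom.comp ρ.toHomUnits
  have hπ : ∀ g u, π g u = e.symm (L g (e u).1 + δ g (e u).2, L g (e u).2) := fun g u => rfl
  have hub : UniformlyBoundedRep π := by
    refine ⟨‖(e.symm : V × V →L[ℂ] E)‖ * ((1 + C) * ‖(e : E →L[ℂ] V × V)‖), fun g => ?_⟩
    refine ContinuousLinearMap.opNorm_le_bound _ (by positivity) fun u => ?_
    have h1 : ‖(e u).1‖ ≤ ‖e u‖ := norm_fst_le _
    have h2 : ‖(e u).2‖ ≤ ‖e u‖ := norm_snd_le _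
    have h3 : ‖e u‖ ≤ ‖(e : E →L[ℂ] V × V)‖ * ‖u‖ := (e : E →L[ℂ] V × V).le_opNorm u
    have h4 : ‖(L g (e u).1 + δ g (e u).2, L g (e u).2)‖ ≤ (1 + C) * ‖e u‖ := by
      refine norm_prod_le_iff.2 ⟨?_, ?_⟩
      · refine (norm_add_le _ _).trans ?_
        have := mul_le_mul_of_nonneg_left h2 hC
        linarith [hL g (e u).1, hδC g (e u).2]
      · have := mul_nonneg hC (norm_nonneg (e u))
        linarith [hL g (e u).2]
    calc ‖π g u‖ ≤ ‖(e.symm : V × V →L[ℂ] E)‖ * ‖(L g (e u).1 + δ g (e u).2, L g (e u).2)‖ :=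
          (e.symm : V × V →L[ℂ] E).le_opNorm _
      _ ≤ ‖(e.symm : V × V →L[ℂ] E)‖ * ((1 + C) * (‖(e : E →L[ℂ] V × V)‖ * ‖u‖)) := by
          gcongr
          exact h4.trans (by gcongr)
      _ = _ := by ring
  obtain ⟨S, hS⟩ := hG E π hub
  -- `M` is the image under `S⁻¹` of the first summand, an invariant closed subspace.
  let M : Submodule ℂ E :=
    (LinearMap.ker ((ContinuousLinearMap.snd ℂ V V) ∘L (e : E →L[ℂ] V × V) ∘L
      (S : E →L[ℂ] E)).toLinearMap)
  have hMmem : ∀ u, u ∈ M ↔ (e (S u)).2 = 0 := fun u => Iff.rfl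
  have hMclosed : IsClosed (M : Set E) :=
    ContinuousLinearMap.isClosed_ker ((ContinuousLinearMap.snd ℂ V V) ∘L
      (e : E →L[ℂ] V × V) ∘L (S : E →L[ℂ] E))
  have : CompleteSpace M := hMclosed.completeSpace_coe
  let U : G → E →ₗᵢ[ℂ] E := fun g =>
    { toLinearMap := ((S.symm : E →L[ℂ] E) ∘L (π g : E →L[ℂ] E) ∘L (S : E →L[ℂ] E)).toLinearMap
      norm_map' := fun v => hS g v }
  have hU : ∀ g u, S (U g u) = π g (S u) := fun g u => S.apply_symm_apply _
  have hUinv : ∀ g u, U g (U g⁻¹ u) = u := fun g u => by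
    apply S.injective
    rw [hU, hU]
    change (π g * π g⁻¹) (S u) = S u
    rw [← map_mul, mul_inv_cancel, map_one]
    rfl
  have hUM : ∀ g u, u ∈ M → U g u ∈ M := fun g u hu => by
    rw [hMmem] at hu ⊢
    rw [hU, hπ]
    simp [hu]
  have hUMo : ∀ g u, u ∈ Mᗮ → U g u ∈ Mᗮ := fun g u hu => by
    rw [Submodule.mem_orthogonal] at hu ⊢
    intro m hm
    rw [← hUinv g m, LinearIsometry.inner_map_map]
    exact hu _ (hUM _ _ hm)
  have hcomm : ∀ g u, M.starProjection (U g u) = U g (M.starProjection u) := fun g u => by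
    refine Submodule.eq_starProjection_of_mem_orthogonal (hUM g _ (M.starProjection_apply_mem u)) ?_
    rw [← map_sub]
    exact hUMo g _ (M.sub_starProjection_mem_orthogonal u)
  let Q : V × V →L[ℂ] V × V := (e : E →L[ℂ] V × V) ∘L (S : E →L[ℂ] E) ∘L M.starProjection ∘L
    (S.symm : E →L[ℂ] E) ∘L (e.symm : V × V →L[ℂ] E)
  have hQ2 : ∀ x, (Q x).2 = 0 := fun x => (hMmem _).1 (M.starProjection_apply_mem _)
  have hQ1 : ∀ v, Q (v, 0) = (v, 0) := fun v => by
    have : S.symm (e.symm (v, 0)) ∈ M := by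
      rw [hMmem]
      simp
    change e (S (M.starProjection (S.symm (e.symm (v, 0))))) = _
    rw [Submodule.starProjection_eq_self_iff.2 this]
    simp
  have hQcomm : ∀ g v w, Q (L g v + δ g w, L g w) =
      (L g (Q (v, w)).1 + δ g (Q (v, w)).2, L g (Q (v, w)).2) := fun g v w => by
    have h1 : S.symm (e.symm (L g v + δ g w, L g w)) = U g (S.symm (e.symm (v, w))) := by
      apply S.injective
      rw [hU, hπ]
      simp
    change e (S (M.starProjection (S.symm (e.symm (L g v + δ g w, L g w))))) = _
    rw [h1, hcomm, hU, hπ]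
    simp [Q]
  refine ⟨.fst ℂ V V ∘L Q ∘L .inr ℂ V V, fun g v => ?_⟩
  have h := congrArg Prod.fst (hQcomm g 0 v)
  have hsplit : ((L g 0 + δ g v, L g v) : V × V) = (δ g v, 0) + (0, L g v) := by simp
  rw [hsplit, map_add, hQ1, hQ2] at h
  simp only [Prod.fst_add, map_zero, add_zero] at h
  simpa using eq_sub_of_add_eq h

/-- A matrix indexed by `ι` whose rows and columns have `ℓ¹`-norm at most `C`. -/
structure SchurBounded {ι : Type*} (d : ι → ι → ℂ) (C : ℝ) : Prop where
  row : ∀ s (X : Finset ι), ∑ t ∈ X, ‖d s t‖ ≤ C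
  col : ∀ t (X : Finset ι), ∑ s ∈ X, ‖d s t‖ ≤ C

namespace SchurBounded

variable {ι : Type*} {d : ι → ι → ℂ} {C : ℝ}

theorem nonneg [Nonempty ι] (hd : SchurBounded d C) : 0 ≤ C := by
  simpa using hd.row (Classical.arbitrary ι) ∅

theorem summable_mul (hd : SchurBounded d C) (v : lp (fun _ : ι => ℂ) 2) (s : ι) :
    Summable fun t => d s t * v t := by
  have h1 : Summable fun t => ‖d s t‖ :=
    summable_of_sum_le (fun _ => norm_nonneg _) (hd.row s)
  refine Summable.of_norm_bounded (h1.mul_right ‖v‖) fun t => ?_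
  rw [norm_mul]
  gcongr
  exact lp.norm_apply_le_norm two_ne_zero v t

theorem sum_norm_sq_le (hd : SchurBounded d C) (v : lp (fun _ : ι => ℂ) 2) (Y : Finset ι) :
    ∑ s ∈ Y, ‖∑' t, d s t * v t‖ ^ 2 ≤ (C * ‖v‖) ^ 2 := by
  have hlim : Filter.Tendsto (fun X : Finset ι => ∑ s ∈ Y, ‖∑ t ∈ X, d s t * v t‖ ^ 2)
      Filter.atTop (nhds (∑ s ∈ Y, ‖∑' t, d s t * v t‖ ^ 2)) :=
    tendsto_finsetSum _ fun s _ => ((hd.summable_mul v s).hasSum.norm).pow 2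
  refine le_of_tendsto' hlim fun X => ?_
  rcases isEmpty_or_nonempty ι with hι | hι
  · rw [Finset.eq_empty_of_isEmpty Y]
    simpa using sq_nonneg (C * ‖v‖)
  have hC := hd.nonneg
  have hv : ∑ t ∈ X, ‖v t‖ ^ 2 ≤ ‖v‖ ^ 2 := by
    simpa using lp.sum_rpow_le_norm_rpow (p := 2) (by simp) v X
  calc ∑ s ∈ Y, ‖∑ t ∈ X, d s t * v t‖ ^ 2
      ≤ ∑ s ∈ Y, C * ∑ t ∈ X, ‖d s t‖ * ‖v t‖ ^ 2 := by
        refine Finset.sum_le_sum fun s _ => ?_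
        have h1 : ‖∑ t ∈ X, d s t * v t‖ ≤ ∑ t ∈ X, ‖d s t‖ * ‖v t‖ :=
          (norm_sum_le _ _).trans_eq (by simp)
        have h2 : (∑ t ∈ X, ‖d s t‖ * ‖v t‖) ^ 2 ≤
            (∑ t ∈ X, ‖d s t‖) * ∑ t ∈ X, ‖d s t‖ * ‖v t‖ ^ 2 :=
          Finset.sum_sq_le_sum_mul_sum_of_sq_le_mul _ (fun _ _ => norm_nonneg _)
            (fun _ _ => by positivity) (fun _ _ => le_of_eq (by ring))
        calc _ ≤ (∑ t ∈ X, ‖d s t‖ * ‖v t‖) ^ 2 := by gcongr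
          _ ≤ _ := h2
          _ ≤ _ := by
            gcongr
            exact hd.row s X
    _ = C * ∑ t ∈ X, (∑ s ∈ Y, ‖d s t‖) * ‖v t‖ ^ 2 := by
        rw [← Finset.mul_sum, Finset.sum_comm]
        simp_rw [Finset.sum_mul]
    _ ≤ C * ∑ t ∈ X, C * ‖v t‖ ^ 2 := by
        gcongr with t _
        exact hd.col t Y
    _ = C ^ 2 * ∑ t ∈ X, ‖v t‖ ^ 2 := by
        rw [← Finset.mul_sum]
        ring
    _ ≤ C ^ 2 * ‖v‖ ^ 2 := by gcongr
    _ = (C * ‖v‖) ^ 2 := by ring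

/-- Schur's test: a matrix with bounded rows and columns defines a bounded operator on `ℓ²`. -/
theorem exists_clm [Nonempty ι] (hd : SchurBounded d C) :
    ∃ T : lp (fun _ : ι => ℂ) 2 →L[ℂ] lp (fun _ : ι => ℂ) 2,
      (∀ v s, T v s = ∑' t, d s t * v t) ∧ ∀ v, ‖T v‖ ≤ C * ‖v‖ := by
  have hmem : ∀ v : lp (fun _ : ι => ℂ) 2, Memℓp (fun s => ∑' t, d s t * v t) 2 := fun v =>
    memℓp_gen' (C := (C * ‖v‖) ^ 2) fun Y => by simpa using hd.sum_norm_sq_le v Y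
  let T : lp (fun _ : ι => ℂ) 2 →ₗ[ℂ] lp (fun _ : ι => ℂ) 2 :=
    { toFun := fun v => ⟨_, hmem v⟩
      map_add' := fun v w => by
        ext s
        change ∑' t, d s t * (v t + w t) = ∑' t, d s t * v t + ∑' t, d s t * w t
        rw [← (hd.summable_mul v s).tsum_add (hd.summable_mul w s)]
        simp only [mul_add]
      map_smul' := fun c v => by
        ext s
        change ∑' t, d s t * (c * v t) = c * ∑' t, d s t * v t
        rw [← tsum_mul_left]
        exact tsum_congr fun t => by ring }
  have hT : ∀ v, ‖T v‖ ≤ C * ‖v‖ := fun v =>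
    lp.norm_le_of_forall_sum_le (by simp) (mul_nonneg hd.nonneg (norm_nonneg v)) fun Y => by
      simpa [T] using hd.sum_norm_sq_le v Y
  exact ⟨T.mkContinuous C hT, fun v s => rfl, hT⟩

end SchurBounded

/-- Left translation on `ℓ²(G)`. -/
theorem exists_leftTranslation (G : Type*) [Group G] :
    ∃ L : G →* (lp (fun _ : G => ℂ) 2 →L[ℂ] lp (fun _ : G => ℂ) 2),
      (∀ g v s, L g v s = v (g⁻¹ * s)) ∧ ∀ g v, ‖L g v‖ ≤ ‖v‖ := by
  classical
  have hd : ∀ g : G, SchurBounded (fun s t : G => if t = g⁻¹ * s then (1 : ℂ) else 0) 1 := by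
    refine fun g => ⟨fun s X => ?_, fun t X => ?_⟩
    · simp only [apply_ite norm, norm_one, norm_zero, Finset.sum_ite_eq']
      split_ifs <;> simp
    · simp only [eq_inv_mul_iff_mul_eq, apply_ite norm, norm_one, norm_zero, Finset.sum_ite_eq]
      split_ifs <;> simp
  choose T hT hTn using fun g => (hd g).exists_clm
  have hT' : ∀ g v s, T g v s = v (g⁻¹ * s) := fun g v s => by simp [hT]
  refine ⟨⟨⟨T, ?_⟩, ?_⟩, hT', fun g v => (hTn g v).trans_eq (one_mul _)⟩
  · ext v s
    simp [hT']
  · intro g h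
    ext v s
    simp [hT', mul_assoc]

/-- A Littlewood decomposition of the translation-invariant matrix `f (s⁻¹ * t)`: it is the sum of
a nonnegative matrix `a` with bounded rows and a nonnegative matrix with bounded columns. -/
structure LittlewoodDecomposition {G : Type*} [Group G] (f : G → ℝ) (a : G → G → ℝ) (C : ℝ) :
    Prop where
  nonneg : ∀ s t, 0 ≤ a s t
  le : ∀ s t, a s t ≤ f (s⁻¹ * t)
  row : ∀ s (X : Finset G), ∑ t ∈ X, a s t ≤ C
  col : ∀ t (X : Finset G), ∑ s ∈ X, (f (s⁻¹ * t) - a s t) ≤ C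

namespace LittlewoodDecomposition

variable {G : Type} [Group G] {f : G → ℝ} {a : G → G → ℝ} {C : ℝ}

theorem schurBounded (h : LittlewoodDecomposition f a C) (g : G) :
    SchurBounded (fun s t => ((a (g⁻¹ * s) t - a s (g * t) : ℝ) : ℂ)) (C + C) := by
  classical
  refine ⟨fun s X => ?_, fun t X => ?_⟩
  · have h2 : ∑ t ∈ X, a s (g * t) ≤ C := by
      simpa using h.row s (X.map (Equiv.mulLeft g).toEmbedding)
    refine le_trans ?_ (add_le_add (h.row (g⁻¹ * s) X) h2)
    rw [← Finset.sum_add_distrib]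
    refine Finset.sum_le_sum fun t _ => ?_
    rw [Complex.norm_real, Real.norm_eq_abs, abs_le]
    constructor <;> linarith [h.nonneg (g⁻¹ * s) t, h.nonneg s (g * t)]
  · have h2 : ∑ s ∈ X, (f (s⁻¹ * (g * t)) - a (g⁻¹ * s) t) ≤ C := by
      simpa [mul_assoc] using h.col t (X.map (Equiv.mulLeft g⁻¹).toEmbedding)
    refine le_trans ?_ (add_le_add (h.col (g * t) X) h2)
    rw [← Finset.sum_add_distrib]
    refine Finset.sum_le_sum fun s _ => ?_
    have h3 := h.le (g⁻¹ * s) t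
    rw [mul_inv_rev, inv_inv, mul_assoc] at h3
    rw [Complex.norm_real, Real.norm_eq_abs, abs_le]
    constructor <;> linarith [h.le s (g * t)]

theorem memℓp_row (h : LittlewoodDecomposition f a C) (s : G) :
    Memℓp (fun t => (a s t : ℂ)) 2 := by
  refine Memℓp.of_exponent_ge (q := 1) (memℓp_gen' (C := C) fun X => ?_) (by norm_num)
  simpa [abs_of_nonneg (h.nonneg _ _)] using h.row s X

theorem memℓp_col (h : LittlewoodDecomposition f a C) (t : G) :
    Memℓp (fun s => ((f (s⁻¹ * t) - a s t : ℝ) : ℂ)) 2 := by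
  refine Memℓp.of_exponent_ge (q := 1) (memℓp_gen' (C := C) fun X => ?_) (by norm_num)
  simpa only [ENNReal.toReal_one, Real.rpow_one, Complex.norm_real, Real.norm_eq_abs,
    abs_of_nonneg (sub_nonneg.2 (h.le _ _))] using h.col t X

/-- Over a unitarizable group, functions with a Littlewood decomposition are square-summable. -/
theorem summable_sq (h : LittlewoodDecomposition f a C) (hG : Unitarizable G) :
    Summable fun g => f g ^ 2 := by
  classical
  obtain ⟨L, hL, hLn⟩ := exists_leftTranslation G
  choose δ hδ hδn using fun g => (h.schurBounded g).exists_clm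
  have hder : ∀ g k v, δ (g * k) v = L g (δ k v) + δ g (L k v) := fun g k v => by
    ext s
    rw [lp.coeFn_add, Pi.add_apply, hL, hδ, hδ, hδ]
    have hre : ∑' t, ((a (g⁻¹ * s) t - a s (g * t) : ℝ) : ℂ) * L k v t =
        ∑' t, ((a (g⁻¹ * s) (k * t) - a s (g * (k * t)) : ℝ) : ℂ) * v t := by
      rw [← (Equiv.mulLeft k).tsum_eq]
      simp [hL]
    have hsum := (Equiv.mulLeft k).summable_iff.2 ((h.schurBounded g).summable_mul (L k v) s)
    have hsum' : Summable fun t =>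
        ((a (g⁻¹ * s) (k * t) - a s (g * (k * t)) : ℝ) : ℂ) * v t := by
      refine hsum.congr fun t => ?_
      simp [hL]
    rw [hre, ← ((h.schurBounded k).summable_mul v (g⁻¹ * s)).tsum_add hsum']
    refine tsum_congr fun t => ?_
    simp only [mul_inv_rev, mul_assoc]
    push_cast
    ring
  obtain ⟨B, hB⟩ := hG.exists_inner_derivation L hLn δ hder (h.schurBounded 1).nonneg hδn
  let b : G → G → ℂ := fun s t => B (lp.single 2 t 1) s
  have hLs : ∀ g t : G, L g (lp.single 2 t 1) = lp.single 2 (g * t) (1 : ℂ) := fun g t => by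
    ext s
    rw [hL, lp.single_apply, lp.single_apply]
    simp only [Pi.single_apply, inv_mul_eq_iff_eq_mul]
  have hinv : ∀ g s t, (a (g⁻¹ * s) t : ℂ) - b (g⁻¹ * s) t = a s (g * t) - b s (g * t) := by
    intro g s t
    have h1 := congrArg (fun u : lp (fun _ : G => ℂ) 2 => u s) (hB g (lp.single 2 t 1))
    simp only [lp.coeFn_sub, Pi.sub_apply, hL, hLs, hδ] at h1
    rw [tsum_eq_single t (fun t' ht' => by simp [lp.single_apply, ht'])] at h1
    simp only [lp.single_apply, Pi.single_eq_same, mul_one, Complex.ofReal_sub] at h1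
    linear_combination h1
  have hrow : Memℓp (fun t => b 1 t) 2 := by
    have h1 : Memℓp (star fun t => b 1 t) 2 := by
      refine Memℓp.mono' (lp.memℓp (ContinuousLinearMap.adjoint B (lp.single 2 1 1))) fun t => ?_
      have h2 := ContinuousLinearMap.adjoint_inner_right B
        (lp.single 2 t (1 : ℂ)) (lp.single 2 1 (1 : ℂ))
      rw [lp.inner_single_left, lp.inner_single_right] at h2
      simp only [RCLike.inner_apply, map_one, mul_one, one_mul] at h2
      rw [h2]
      simp [b]
    exact Memℓp.star_iff.1 h1
  have hcol : Memℓp (fun s => b s 1) 2 := lp.memℓp (B (lp.single 2 1 1))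
  have hinvert : ∀ {u : G → ℂ}, Memℓp u 2 → Memℓp (fun t => u t⁻¹) 2 := fun {u} hu => by
    rw [memℓp_gen_iff (by simp)] at hu ⊢
    exact (Equiv.inv G).summable_iff.2 hu
  have key : Memℓp (fun t => (f t : ℂ)) 2 := by
    have h1 := (((h.memℓp_row 1).sub hrow).add (hinvert ((h.memℓp_col 1).add hcol)))
    convert h1 using 1
    ext t
    have h2 := hinv t 1 1
    simp only [mul_one] at h2
    simp only [Pi.add_apply, Pi.sub_apply, inv_inv, mul_one]
    push_cast
    linear_combination h2
  have := (memℓp_gen_iff (by simp)).1 key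
  simpa using this

end LittlewoodDecomposition

/-- If every finite vertex set `Y` spans at most `#Y` of the directed edges `A`, then the edges can
be distributed among their endpoints so that every vertex receives at most one edge. Here `a s t`
indicates that the edge `(s, t)` is given to its source. -/
theorem exists_edge_distribution {V : Type*} [DecidableEq V] (A : Finset (V × V))
    (hA : ∀ Y : Finset V, (A.filter fun e => e.1 ∈ Y ∧ e.2 ∈ Y).card ≤ Y.card) :
    ∃ a : V → V → ℝ, (∀ s t, 0 ≤ a s t) ∧ (∀ s t, a s t ≤ if (s, t) ∈ A then 1 else 0) ∧
      (∀ s (Z : Finset V), ∑ t ∈ Z, a s t ≤ 1) ∧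
      ∀ t (Z : Finset V), ∑ s ∈ Z, ((if (s, t) ∈ A then 1 else 0) - a s t) ≤ 1 := by
  obtain ⟨r, hr, hrm⟩ := (Finset.all_card_le_biUnion_card_iff_exists_injective
    (fun e : A => ({e.1.1, e.1.2} : Finset V))).1 fun B => by
      refine le_trans ?_ (hA _)
      rw [← Finset.card_map (Function.Embedding.subtype _)]
      refine Finset.card_le_card fun e he => ?_
      obtain ⟨⟨e, heA⟩, heB, rfl⟩ := Finset.mem_map.1 he
      rw [Finset.mem_filter]
      refine ⟨heA, ?_, ?_⟩ <;> exact Finset.mem_biUnion.2 ⟨_, heB, by simp⟩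
  have hr' : ∀ e (h : e ∈ A), r ⟨e, h⟩ = e.1 ∨ r ⟨e, h⟩ = e.2 := fun e h => by
    simpa using hrm ⟨e, h⟩
  have hone : ∀ (Z : Finset V) (P : V → Prop) [DecidablePred P],
      (∀ x y, P x → P y → x = y) → ∑ x ∈ Z, (if P x then (1 : ℝ) else 0) ≤ 1 := by
    intro Z P _ hP
    rw [Finset.sum_boole]
    exact_mod_cast Finset.card_le_one.2 fun x hx y hy =>
      hP x y (Finset.mem_filter.1 hx).2 (Finset.mem_filter.1 hy).2
  classical
  refine ⟨fun s t => if ∃ h : (s, t) ∈ A, r ⟨(s, t), h⟩ = s then 1 else 0, fun s t => ?_,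
    fun s t => ?_, fun s Z => ?_, fun t Z => ?_⟩
  · dsimp only
    split_ifs <;> norm_num
  · dsimp only
    split_ifs with h1 h2 h2 <;> norm_num
    exact h2 h1.1
  · refine hone Z _ ?_
    rintro x y ⟨hx, hx'⟩ ⟨hy, hy'⟩
    have := hr (hx'.trans hy'.symm)
    simpa using this
  · refine le_trans (Finset.sum_le_sum fun s _ => ?_)
      (hone Z (fun s => ∃ h : (s, t) ∈ A, r ⟨(s, t), h⟩ = t) ?_)
    · by_cases h : (s, t) ∈ A
      · rcases hr' _ h with h1 | h1
        · simp only [h, h1, exists_true_left, if_true, sub_self]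
          split_ifs <;> norm_num
        · simp only [h, h1, exists_true_left, if_true]
          split_ifs <;> norm_num
      · simp [h]
    · rintro x y ⟨hx, hx'⟩ ⟨hy, hy'⟩
      have := hr (hx'.trans hy'.symm)
      simpa using this

/-- There are at least `n` linearly independent homomorphisms from the subgroup `H` to `ZMod 2`:
`ψ` parametrizes them, each being extended to `G` in an arbitrary way. -/
def HasIndependentHoms {G : Type*} [Group G] (H : Subgroup G) (n : ℕ) : Prop :=
  ∃ ψ : (Fin n → ZMod 2) →ₗ[ZMod 2] (G → ZMod 2),
    (∀ c, ∀ x ∈ H, ∀ y ∈ H, ψ c (x * y) = ψ c x + ψ c y) ∧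
    ∀ c, (∀ x ∈ H, ψ c x = 0) → c = 0

/-- If the normal subgroup `H` has `n` independent homomorphisms to `ZMod 2`, then the Schreier
graph of `H` contains a set `A` of `n` edges whose preimage in the Cayley graph is sparse on finite
sets on which the quotient map is injective. -/
theorem HasIndependentHoms.exists_sparse_edges {K : Type*} [Group K] {H : Subgroup K} [H.Normal]
    [H.FiniteIndex] {n : ℕ} (hH : HasIndependentHoms H n) (T : Finset K)
    (hT : Subgroup.closure (T : Set K) = ⊤) :
    ∃ A : Finset ((K ⧸ H) × K), (∀ e ∈ A, e.2 ∈ T) ∧ n ≤ A.card ∧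
      ∀ (k : K) (X : Finset K), Set.InjOn (fun x : K => (x : K ⧸ H)) X →
      ∀ D : Finset (K × K),
        (∀ e ∈ D, e.1 ∈ X ∧ e.2 ∈ X ∧ (((k * e.1 : K) : K ⧸ H), e.1⁻¹ * e.2) ∈ A) →
        D.card ≤ X.card := by
  classical
  obtain ⟨ψ, hmul, hinj⟩ := hH
  let σ : K ⧸ H → K := Quotient.out
  have hσ : ∀ q, (σ q : K ⧸ H) = q := fun q => Quotient.out_eq' q
  let ev : K → Module.Dual (ZMod 2) (Fin n → ZMod 2) := fun x =>
    (LinearMap.proj (x * (σ x)⁻¹) : (K → ZMod 2) →ₗ[ZMod 2] ZMod 2) ∘ₗ ψ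
  let c : (K ⧸ H) × T → Module.Dual (ZMod 2) (Fin n → ZMod 2) := fun e =>
    (LinearMap.proj (σ e.1 * e.2 * (σ (e.1 * ((e.2 : K) : K ⧸ H)))⁻¹) :
      (K → ZMod 2) →ₗ[ZMod 2] ZMod 2) ∘ₗ ψ
  have hev : ∀ x φ, ev x φ = ψ φ (x * (σ x)⁻¹) := fun _ _ => rfl
  have hmem : ∀ x y : K, (x : K ⧸ H) = y → x * y⁻¹ ∈ H := fun x y h => by
    rw [← QuotientGroup.eq_one_iff, QuotientGroup.mk_mul, h, QuotientGroup.mk_inv, mul_inv_cancel]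
  have hc : ∀ (x : K) (s : T), c (x, s) = ev (x * s) - ev x := fun x s => by
    refine LinearMap.ext fun φ => ?_
    rw [LinearMap.sub_apply, hev, hev, eq_sub_iff_add_eq', QuotientGroup.mk_mul]
    change _ + ψ φ (σ x * s * (σ (x * ((s : K) : K ⧸ H)))⁻¹) = _
    rw [← hmul φ _ (hmem _ _ (hσ _).symm) _ (hmem _ _ ?_)]
    · group
    · rw [QuotientGroup.mk_mul, hσ, hσ]
  obtain ⟨κ, j, hj, hspan, hind⟩ := exists_linearIndependent' (ZMod 2) c
  have : Finite κ := Finite.of_injective j hj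
  have := Fintype.ofFinite κ
  have hcz : ∀ φ, (∀ i, c (j i) φ = 0) → φ = 0 := by
    intro φ hφ
    have hall : ∀ e, c e φ = 0 := by
      have hle : Submodule.span (ZMod 2) (Set.range (c ∘ j)) ≤
          LinearMap.ker (Module.Dual.eval (ZMod 2) (Fin n → ZMod 2) φ) := by
        rw [Submodule.span_le]
        rintro _ ⟨i, rfl⟩
        exact hφ i
      intro e
      have h : c e ∈ LinearMap.ker (Module.Dual.eval (ZMod 2) (Fin n → ZMod 2) φ) :=
        hle (hspan ▸ Submodule.subset_span (Set.mem_range_self e))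
      exact h
    have hstep : ∀ (s : T) (x : K), ev (x * s) φ = ev x φ := fun s x => by
      have := hall (x, s)
      rwa [hc, LinearMap.sub_apply, sub_eq_zero] at this
    have hconst : ∀ y : K, ∀ x : K, ev (x * y) φ = ev x φ := by
      intro y
      have hy : y ∈ Subgroup.closure (T : Set K) := hT ▸ Subgroup.mem_top y
      induction hy using Subgroup.closure_induction with
      | mem s hs => exact hstep ⟨s, hs⟩
      | one => simp
      | mul y z _ _ hy hz =>
        intro x
        rw [← mul_assoc, hz, hy]
      | inv y _ hy =>
        intro x
        rw [← hy (x * y⁻¹), inv_mul_cancel_right]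
    refine hinj φ fun h hh => ?_
    have h1 := hconst h 1
    rw [one_mul, hev, hev, (QuotientGroup.eq_one_iff h).2 hh, QuotientGroup.mk_one, one_mul,
      hmul φ h hh _ ?_] at h1
    · exact add_eq_right.1 h1
    · exact inv_mem ((QuotientGroup.eq_one_iff _).1 (hσ 1))
  refine ⟨Finset.univ.image fun i => ((j i).1, ((j i).2 : K)), ?_, ?_, ?_⟩
  · intro e he
    obtain ⟨i, -, rfl⟩ := Finset.mem_image.1 he
    exact (j i).2.2
  · rw [Finset.card_image_of_injective]
    · have h1 : Function.Injective (LinearMap.pi fun i => c (j i)) := by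
        rw [injective_iff_map_eq_zero]
        exact fun φ hφ => hcz φ fun i => congrFun hφ i
      simpa using LinearMap.finrank_le_finrank_of_injective h1
    · intro i i' h
      apply hj
      simp only [Prod.mk.injEq] at h
      exact Prod.ext h.1 (Subtype.ext h.2)
  · intro k X hX D hD
    have hD' : ∀ e : D, ∃ i : κ, (j i).1 = ((k * e.1.1 : K) : K ⧸ H) ∧
        ((j i).2 : K) = e.1.1⁻¹ * e.1.2 := by
      intro e
      obtain ⟨i, -, hi⟩ := Finset.mem_image.1 (hD e.1 e.2).2.2
      exact ⟨i, congrArg Prod.fst hi, congrArg Prod.snd hi⟩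
    choose i hi1 hi2 using hD'
    have hiinj : Function.Injective i := by
      intro e e' h
      have h1 : e.1.1 = e'.1.1 := by
        apply hX (hD _ e.2).1 (hD _ e'.2).1
        have := (hi1 e).symm.trans ((congrArg (fun i => (j i).1) h).trans (hi1 e'))
        simpa using this
      have h2 : e.1.1⁻¹ * e.1.2 = e'.1.1⁻¹ * e'.1.2 := by rw [← hi2, ← hi2, h]
      rw [h1] at h2
      exact Subtype.ext (Prod.ext h1 (mul_left_cancel h2))
    have hind' : LinearIndependent (ZMod 2) (fun e : D => c (j (i e))) := hind.comp i hiinj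
    let W := Submodule.span (ZMod 2) ((X.image fun x => ev (k * x) : Finset _) :
      Set (Module.Dual (ZMod 2) (Fin n → ZMod 2)))
    have hW : ∀ e : D, c (j (i e)) ∈ W := by
      intro e
      have h1 : j (i e) = (((k * e.1.1 : K) : K ⧸ H), (j (i e)).2) := Prod.ext (hi1 e) rfl
      rw [h1, hc, hi2, mul_assoc, mul_inv_cancel_left]
      exact W.sub_mem
        (Submodule.subset_span (Finset.mem_image_of_mem _ (hD _ e.2).2.1))
        (Submodule.subset_span (Finset.mem_image_of_mem _ (hD _ e.2).1))
    have h3 : LinearIndependent (ZMod 2) (fun e : D => (⟨c (j (i e)), hW e⟩ : W)) :=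
      LinearIndependent.of_comp W.subtype hind'
    calc D.card = Fintype.card D := (Fintype.card_coe D).symm
      _ ≤ Module.finrank (ZMod 2) W := h3.fintype_card_le_finrank
      _ ≤ (X.image fun x => ev (k * x)).card := finrank_span_finset_le_card _
      _ ≤ X.card := Finset.card_image_le

/-- A Littlewood decomposition on the finite set `X`, for a function of large total mass. -/
theorem HasIndependentHoms.exists_decomposition_on {K : Type*} [Group K] {H : Subgroup K}
    [H.Normal] [H.FiniteIndex] {n : ℕ} (hH : HasIndependentHoms H n) (T : Finset K)
    (hT : Subgroup.closure (T : Set K) = ⊤) (X : Finset K)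
    (hX : Set.InjOn (fun x : K => (x : K ⧸ H)) X) :
    ∃ (f : K → ℝ) (a : K → K → ℝ), (∀ s, f s ∈ Set.Icc (0 : ℝ) 1) ∧ (∀ s ∉ T, f s = 0) ∧
      (n ≤ (H.index : ℝ) * ∑ s ∈ T, f s) ∧ (∀ s t, a s t ∈ Set.Icc (0 : ℝ) 1) ∧
      (∀ s ∈ X, ∀ t ∈ X, a s t ≤ f (s⁻¹ * t)) ∧ (∀ s, ∑ t ∈ X, a s t ≤ 1) ∧
      ∀ t ∈ X, ∑ s ∈ X, (f (s⁻¹ * t) - a s t) ≤ 1 := by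
  classical
  obtain ⟨A, hAT, hAn, hA⟩ := hH.exists_sparse_edges T hT
  have := Fintype.ofFinite (K ⧸ H)
  let D : K ⧸ H → Finset (K × K) := fun q =>
    (X ×ˢ X).filter fun e => (q * (e.1 : K ⧸ H), e.1⁻¹ * e.2) ∈ A
  have hD : ∀ q s t, s ∈ X → t ∈ X → ((s, t) ∈ D q ↔ (q * (s : K ⧸ H), s⁻¹ * t) ∈ A) :=
    fun q s t hs ht => by simp [D, hs, ht]
  have hdist := fun q => exists_edge_distribution (D q) fun Y => by
    obtain ⟨k, rfl⟩ := QuotientGroup.mk_surjective q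
    refine le_trans (hA k (X ∩ Y) (hX.mono (by simp)) _ fun e he => ?_)
      (Finset.card_le_card Finset.inter_subset_right)
    simp only [D, Finset.mem_filter, Finset.mem_product] at he
    obtain ⟨⟨⟨h1, h2⟩, h3⟩, h4, h5⟩ := he
    exact ⟨Finset.mem_inter.2 ⟨h1, h4⟩, Finset.mem_inter.2 ⟨h2, h5⟩, h3⟩
  choose b hb0 hb1 hbrow hbcol using hdist
  have hN : (H.index : ℝ) = Fintype.card (K ⧸ H) := by
    rw [Subgroup.index_eq_card, Nat.card_eq_fintype_card]
  have hNpos : (0 : ℝ) < Fintype.card (K ⧸ H) := by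
    rw [← hN]
    exact_mod_cast Nat.pos_of_ne_zero Subgroup.FiniteIndex.index_ne_zero
  have havg : ∀ u : K ⧸ H → ℝ, (∀ q, u q ≤ 1) → (∑ q, u q) / Fintype.card (K ⧸ H) ≤ 1 := by
    intro u hu
    rw [div_le_one hNpos]
    exact (Finset.sum_le_sum fun q _ => hu q).trans_eq (by simp)
  let f : K → ℝ := fun s => (∑ q : K ⧸ H, if (q, s) ∈ A then 1 else 0) / Fintype.card (K ⧸ H)
  let a : K → K → ℝ := fun s t => (∑ q, b q s t) / Fintype.card (K ⧸ H)
  have hf : ∀ s ∈ X, ∀ t ∈ X, f (s⁻¹ * t) =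
      (∑ q : K ⧸ H, if (s, t) ∈ D q then 1 else 0) / Fintype.card (K ⧸ H) := by
    intro s hs t ht
    simp only [f]
    rw [← Equiv.sum_comp (Equiv.mulRight (s : K ⧸ H))
      (fun q => if (q, s⁻¹ * t) ∈ A then (1 : ℝ) else 0)]
    simp only [Equiv.coe_mulRight, hD _ s t hs ht]
    congr!
  refine ⟨f, a, fun s => ⟨?_, ?_⟩, fun s hs => ?_, ?_, fun s t => ⟨?_, ?_⟩, fun s hs t ht => ?_,
    fun s => ?_, fun t ht => ?_⟩
  · positivity
  · exact havg _ fun q => by split_ifs <;> norm_num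
  · have : ∀ q : K ⧸ H, (q, s) ∉ A := fun q hq => hs (hAT _ hq)
    simp [f, this]
  · have h1 : A.card ≤ ∑ s ∈ T, ∑ q : K ⧸ H, if (q, s) ∈ A then 1 else 0 := by
      rw [Finset.sum_comm, ← Finset.sum_product' (s := Finset.univ) (t := T)
        (f := fun q s => if (q, s) ∈ A then 1 else 0), ← Finset.sum_filter, Finset.sum_const,
        smul_eq_mul, mul_one]
      exact Finset.card_le_card fun e he => by simpa [hAT e he] using he
    have h2 : (H.index : ℝ) * ∑ s ∈ T, f s =
        ((∑ s ∈ T, ∑ q : K ⧸ H, if (q, s) ∈ A then 1 else 0 : ℕ) : ℝ) := by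
      rw [hN, ← Finset.sum_div, mul_div_cancel₀ _ hNpos.ne']
      push_cast
      rfl
    rw [h2]
    exact_mod_cast hAn.trans h1
  · exact div_nonneg (Finset.sum_nonneg fun q _ => hb0 q s t) hNpos.le
  · refine havg _ fun q => (hb1 q s t).trans ?_
    split_ifs <;> norm_num
  · rw [hf s hs t ht]
    simp only [a]
    gcongr with q
    exact hb1 q s t
  · simp only [a]
    rw [← Finset.sum_div, Finset.sum_comm]
    exact havg _ fun q => hbrow q s X
  · rw [Finset.sum_congr rfl fun s hs => by rw [hf s hs t ht]]
    simp only [a]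
    simp_rw [← sub_div, ← Finset.sum_sub_distrib]
    rw [← Finset.sum_div, Finset.sum_comm]
    exact havg _ fun q => hbcol q t X

/-- Homological growth along a residual system of finite-index subgroups yields a Littlewood
decomposition of a function of large total mass supported on a prescribed generating set. -/
theorem exists_littlewoodDecomposition_of_growth {K : Type*} [Group K] (T : Finset K)
    (hT : Subgroup.closure (T : Set K) = ⊤) (r : ℝ)
    (hK : ∀ X : Finset K, ∃ (H : Subgroup K) (n : ℕ), H.Normal ∧ H.FiniteIndex ∧
      HasIndependentHoms H n ∧ Set.InjOn (fun x : K => (x : K ⧸ H)) X ∧ r * H.index ≤ n) :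
    ∃ (f : K → ℝ) (a : K → K → ℝ), LittlewoodDecomposition f a 1 ∧ (∀ s, f s ≤ 1) ∧
      (∀ s ∉ T, f s = 0) ∧ r ≤ ∑ s ∈ T, f s := by
  classical
  have hstage : ∀ X : Finset K, ∃ (f : K → ℝ) (a : K → K → ℝ),
      (∀ s, f s ∈ Set.Icc (0 : ℝ) 1) ∧ (∀ s ∉ T, f s = 0) ∧
      (r ≤ ∑ s ∈ T, f s) ∧ (∀ s t, a s t ∈ Set.Icc (0 : ℝ) 1) ∧
      (∀ s ∈ X, ∀ t ∈ X, a s t ≤ f (s⁻¹ * t)) ∧ (∀ s, ∑ t ∈ X, a s t ≤ 1) ∧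
      ∀ t ∈ X, ∑ s ∈ X, (f (s⁻¹ * t) - a s t) ≤ 1 := by
    intro X
    obtain ⟨H, n, hHn, hHf, hH, hX, hr⟩ := hK X
    obtain ⟨f, a, h1, h2, h3, h4⟩ := hH.exists_decomposition_on T hT X hX
    refine ⟨f, a, h1, h2, ?_, h4⟩
    have hpos : (0 : ℝ) < H.index := by
      exact_mod_cast Nat.pos_of_ne_zero Subgroup.FiniteIndex.index_ne_zero
    refine le_of_mul_le_mul_left ?_ hpos
    linarith
  choose F A hF hFT hFr hA hAF hrow hcol using hstage
  let U : Ultrafilter (Finset K) := Ultrafilter.of Filter.atTop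
  have hU : (U : Filter (Finset K)) ≤ Filter.atTop := Ultrafilter.of_le _
  have hlim : ∀ u : Finset K → ℝ, (∀ X, u X ∈ Set.Icc (0 : ℝ) 1) →
      ∃ l, Filter.Tendsto u U (nhds l) := by
    intro u hu
    obtain ⟨l, -, hl⟩ := isCompact_Icc.ultrafilter_le_nhds (U.map u)
      (Filter.le_principal_iff.2 (Filter.mem_map.2 (Filter.univ_mem' hu)))
    exact ⟨l, hl⟩
  choose f hf using fun s => hlim (fun X => F X s) fun X => hF X s
  choose a ha using fun s t => hlim (fun X => A X s t) fun X => hA X s t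
  have hsub : ∀ Z : Finset K, ∀ᶠ X in (U : Filter (Finset K)), Z ⊆ X := fun Z =>
    hU (Filter.eventually_ge_atTop Z)
  refine ⟨f, a, ⟨fun s t => ?_, fun s t => ?_, fun s Z => ?_, fun t Z => ?_⟩, fun s => ?_,
    fun s hs => ?_, ?_⟩
  · exact ge_of_tendsto' (ha s t) fun X => (hA X s t).1
  · refine le_of_tendsto_of_tendsto (ha s t) (hf _) ?_
    filter_upwards [hsub {s, t}] with X hX
    exact hAF X s (hX (by simp)) t (hX (by simp))
  · refine le_of_tendsto (tendsto_finsetSum Z fun t _ => ha s t) ?_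
    filter_upwards [hsub Z] with X hX
    exact (Finset.sum_le_sum_of_subset_of_nonneg hX fun t _ _ => (hA X s t).1).trans (hrow X s)
  · refine le_of_tendsto (tendsto_finsetSum Z fun s _ => (hf (s⁻¹ * t)).sub (ha s t)) ?_
    filter_upwards [hsub (insert t Z)] with X hX
    have ht : t ∈ X := hX (Finset.mem_insert_self t Z)
    refine (Finset.sum_le_sum_of_subset_of_nonneg
      ((Finset.subset_insert t Z).trans hX) fun s hs _ => ?_).trans (hcol X t ht)
    exact sub_nonneg.2 (hAF X s hs t ht)
  · exact le_of_tendsto' (hf s) fun X => (hF X s).2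
  · refine tendsto_nhds_unique (hf s) ?_
    simp only [hFT _ s hs]
    exact tendsto_const_nhds
  · exact ge_of_tendsto' (tendsto_finsetSum T fun s _ => hf s) hFr

/-- A Littlewood decomposition on a subgroup extends by zero, coset by coset. -/
theorem LittlewoodDecomposition.exists_extension {G : Type*} [Group G] {K : Subgroup G}
    {f : K → ℝ} {a : K → K → ℝ} {C : ℝ} (h : LittlewoodDecomposition f a C) :
    ∃ (f' : G → ℝ) (a' : G → G → ℝ), LittlewoodDecomposition f' a' C ∧ (∀ s : K, f' s = f s) ∧
      ∀ s ∉ K, f' s = 0 := by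
  classical
  let τ : G → G := fun x => Quotient.out (x : G ⧸ K)
  have hτ : ∀ x, (τ x)⁻¹ * x ∈ K := fun x => QuotientGroup.eq.1 (Quotient.out_eq' (x : G ⧸ K))
  have hτeq : ∀ x y, x⁻¹ * y ∈ K → τ x = τ y := fun x y hxy =>
    congrArg Quotient.out (QuotientGroup.eq.2 hxy : (x : G ⧸ K) = y)
  let p : G → K := fun x => ⟨(τ x)⁻¹ * x, hτ x⟩
  have hp : ∀ x y (hxy : x⁻¹ * y ∈ K), (p x)⁻¹ * p y = ⟨x⁻¹ * y, hxy⟩ := by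
    intro x y hxy
    apply Subtype.ext
    simp only [p, Subgroup.coe_mul, Subgroup.coe_inv, hτeq x y hxy]
    group
  have hpinj : ∀ x y z, x⁻¹ * y ∈ K → x⁻¹ * z ∈ K → p y = p z → y = z := by
    intro x y z hy hz hyz
    have h1 := congrArg Subtype.val hyz
    simp only [p, ← hτeq x y hy, ← hτeq x z hz] at h1
    exact mul_left_cancel h1
  let f' : G → ℝ := fun x => if hx : x ∈ K then f ⟨x, hx⟩ else 0
  let a' : G → G → ℝ := fun x y => if x⁻¹ * y ∈ K then a (p x) (p y) else 0
  have hf' : ∀ x y, x⁻¹ * y ∈ K → f' (x⁻¹ * y) = f ((p x)⁻¹ * p y) := fun x y hxy => by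
    simp only [f', hp x y hxy, dif_pos hxy]
  refine ⟨f', a', ⟨fun s t => ?_, fun s t => ?_, fun s X => ?_, fun t X => ?_⟩,
    fun s => by simp [f'], fun s hs => by simp [f', hs]⟩
  · simp only [a']
    split_ifs
    exacts [h.nonneg _ _, le_rfl]
  · by_cases hst : s⁻¹ * t ∈ K
    · rw [hf' s t hst]
      simp only [a', if_pos hst]
      exact h.le _ _
    · simp [a', f', hst]
  · simp only [a']
    rw [← Finset.sum_filter, ← Finset.sum_image (f := fun y => a (p s) y) (g := p)]
    · exact h.row _ _
    · intro y hy z hz hyz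
      exact hpinj s y z (Finset.mem_filter.1 hy).2 (Finset.mem_filter.1 hz).2 hyz
  · have h1 : ∀ s, f' (s⁻¹ * t) - a' s t =
        if s⁻¹ * t ∈ K then f ((p s)⁻¹ * p t) - a (p s) (p t) else 0 := by
      intro s
      by_cases hst : s⁻¹ * t ∈ K
      · rw [hf' s t hst]
        simp [a', hst]
      · simp [a', f', hst]
    simp only [h1]
    rw [← Finset.sum_filter,
      ← Finset.sum_image (f := fun x => f (x⁻¹ * p t) - a x (p t)) (g := p)]
    · exact h.col _ _
    · intro y hy z hz hyz
      have hinv : ∀ u ∈ X.filter fun s => s⁻¹ * t ∈ K, t⁻¹ * u ∈ K := fun u hu => by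
        have := inv_mem (Finset.mem_filter.1 hu).2
        rwa [mul_inv_rev, inv_inv] at this
      exact hpinj t y z (hinv y hy) (hinv z hz) hyz

/-- Littlewood decompositions of functions of unbounded square norm obstruct unitarizability. -/
theorem not_unitarizable_of_littlewoodDecomposition {G : Type} [Group G]
    (h : ∀ R : ℝ, ∃ (f : G → ℝ) (a : G → G → ℝ) (T : Finset G), LittlewoodDecomposition f a 1 ∧
      (∀ s, f s ≤ 1) ∧ R ≤ ∑ s ∈ T, f s ^ 2) : ¬ Unitarizable G := by
  intro hG
  choose f a T hd hf1 hT using fun m : ℕ => h (16 ^ m)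
  have hf0 : ∀ m s, 0 ≤ f m s := fun m s => by
    simpa using ((hd m).nonneg 1 s).trans ((hd m).le 1 s)
  have hgeo : HasSum (fun m : ℕ => ((1 : ℝ) / 2) ^ m) 2 := hasSum_geometric_two
  have hfs : ∀ s, Summable fun m => (1 / 2 : ℝ) ^ m * f m s := fun s =>
    Summable.of_nonneg_of_le (fun m => mul_nonneg (by positivity) (hf0 m s))
      (fun m => mul_le_of_le_one_right (by positivity) (hf1 m s)) hgeo.summable
  have has : ∀ s t, Summable fun m => (1 / 2 : ℝ) ^ m * a m s t := fun s t =>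
    Summable.of_nonneg_of_le (fun m => mul_nonneg (by positivity) ((hd m).nonneg s t))
      (fun m => mul_le_mul_of_nonneg_left ((hd m).le s t) (by positivity)) (hfs _)
  have hle2 : ∀ u : ℕ → ℝ, (Summable fun m => (1 / 2 : ℝ) ^ m * u m) → (∀ m, u m ≤ 1) →
      ∑' m, (1 / 2 : ℝ) ^ m * u m ≤ 2 := fun u hu hu1 =>
    (hu.tsum_le_tsum (fun m => mul_le_of_le_one_right (by positivity) (hu1 m))
      hgeo.summable).trans_eq hgeo.tsum_eq
  have hD : LittlewoodDecomposition (fun s => ∑' m, (1 / 2 : ℝ) ^ m * f m s)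
      (fun s t => ∑' m, (1 / 2 : ℝ) ^ m * a m s t) 2 := by
    refine ⟨fun s t => tsum_nonneg fun m => mul_nonneg (by positivity) ((hd m).nonneg s t),
      fun s t => (has s t).tsum_le_tsum
        (fun m => mul_le_mul_of_nonneg_left ((hd m).le s t) (by positivity)) (hfs _),
      fun s X => ?_, fun t X => ?_⟩
    · rw [← Summable.tsum_finsetSum fun t _ => has s t]
      have h1 := summable_sum fun t (_ : t ∈ X) => has s t
      simp only [← Finset.mul_sum] at h1 ⊢
      exact hle2 _ h1 fun m => (hd m).row s X
    · have h0 : ∀ s, ((∑' m, (1 / 2 : ℝ) ^ m * f m (s⁻¹ * t)) - ∑' m, (1 / 2 : ℝ) ^ m * a m s t) =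
          ∑' m, (1 / 2 : ℝ) ^ m * (f m (s⁻¹ * t) - a m s t) := fun s => by
        rw [← (hfs _).tsum_sub (has s t)]
        simp only [mul_sub]
      have hs : ∀ s, Summable fun m => (1 / 2 : ℝ) ^ m * (f m (s⁻¹ * t) - a m s t) := fun s => by
        simpa only [mul_sub] using (hfs _).sub (has s t)
      simp only [h0]
      rw [← Summable.tsum_finsetSum fun s _ => hs s]
      have h1 := summable_sum fun s (_ : s ∈ X) => hs s
      simp only [← Finset.mul_sum] at h1 ⊢
      exact hle2 _ h1 fun m => (hd m).col t X
  have hsum := hD.summable_sq hG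
  have hbd : ∀ m : ℕ, (4 : ℝ) ^ m ≤ ∑' s, (∑' m, (1 / 2 : ℝ) ^ m * f m s) ^ 2 := fun m => by
    calc (4 : ℝ) ^ m = (1 / 4) ^ m * 16 ^ m := by rw [← mul_pow]; norm_num
      _ ≤ (1 / 4) ^ m * ∑ s ∈ T m, f m s ^ 2 :=
        mul_le_mul_of_nonneg_left (hT m) (by positivity)
      _ = ∑ s ∈ T m, ((1 / 2) ^ m * f m s) ^ 2 := by
        rw [Finset.mul_sum]
        refine Finset.sum_congr rfl fun s _ => ?_
        rw [mul_pow, ← pow_mul, mul_comm m 2, pow_mul]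
        norm_num
      _ ≤ ∑ s ∈ T m, (∑' m, (1 / 2 : ℝ) ^ m * f m s) ^ 2 := by
        refine Finset.sum_le_sum fun s _ => pow_le_pow_left₀
          (mul_nonneg (by positivity) (hf0 m s)) ?_ 2
        exact (hfs s).le_tsum m fun k _ => mul_nonneg (by positivity) (hf0 k s)
      _ ≤ _ := hsum.sum_le_tsum _ fun s _ => sq_nonneg _
  obtain ⟨m, hm⟩ := pow_unbounded_of_one_lt (∑' s, (∑' m, (1 / 2 : ℝ) ^ m * f m s) ^ 2)
    (by norm_num : (1 : ℝ) < 4)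
  exact absurd (hbd m) (not_le.2 hm)

/-- The largest normal subgroup contained in the kernel of a homomorphism from a normal subgroup of
finite index to `ZMod 2` has finite index. -/
theorem exists_normal_finiteIndex_of_hom {G : Type*} [Group G] (H : Subgroup G) [H.Normal]
    [H.FiniteIndex] (φ : G → ZMod 2) (hφ : ∀ x ∈ H, ∀ y ∈ H, φ (x * y) = φ x + φ y) :
    ∃ N : Subgroup G, N.Normal ∧ N.FiniteIndex ∧
      ∀ x, x ∈ N ↔ x ∈ H ∧ ∀ g, φ (g * x * g⁻¹) = 0 := by
  let χ : H →* Multiplicative (ZMod 2) :=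
    MonoidHom.mk' (fun x => Multiplicative.ofAdd (φ x)) fun x y => by
      rw [Subgroup.coe_mul, hφ x x.2 y y.2, ofAdd_add]
  have hfin : (χ.ker.map H.subtype).FiniteIndex := by
    refine ⟨?_⟩
    rw [Subgroup.index_map_subtype]
    exact mul_ne_zero Subgroup.FiniteIndex.index_ne_zero Subgroup.FiniteIndex.index_ne_zero
  have hmem : ∀ x, x ∈ χ.ker.map H.subtype ↔ x ∈ H ∧ φ x = 0 := by
    intro x
    constructor
    · rintro ⟨y, hy, rfl⟩
      exact ⟨y.2, hy⟩
    · rintro ⟨hx, hx0⟩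
      exact ⟨⟨x, hx⟩, hx0, rfl⟩
  refine ⟨(χ.ker.map H.subtype).normalCore, inferInstance, inferInstance, fun x => ?_⟩
  constructor
  · intro hx
    exact ⟨((hmem _).1 (Subgroup.normalCore_le _ hx)).1, fun g => ((hmem _).1 (hx g)).2⟩
  · rintro ⟨hx, hx0⟩ g
    exact (hmem _).2 ⟨Subgroup.Normal.conj_mem inferInstance x hx g, hx0 g⟩

/-- A group whose normal subgroups of finite index have many independent homomorphisms to `ZMod 2`
has normal subgroups of arbitrarily large finite index. -/
theorem exists_normal_index_ge {G : Type*} [Group G]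
    (hom : ∀ H : Subgroup G, H.Normal → H.FiniteIndex →
      ∃ m, H.index ≤ 2 * m ∧ HasIndependentHoms H m) (N : ℕ) :
    ∃ H : Subgroup G, H.Normal ∧ H.FiniteIndex ∧ N ≤ H.index := by
  induction N with
  | zero => exact ⟨⊤, inferInstance, inferInstance, Nat.zero_le _⟩
  | succ N ih =>
    obtain ⟨H, hn, hf, hN⟩ := ih
    obtain ⟨m, hm, ψ, hψ, hinj⟩ := hom H hn hf
    have hm0 : 0 < m := by
      have := Nat.pos_of_ne_zero hf.index_ne_zero
      omega
    obtain ⟨K, hKn, hKf, hK⟩ := exists_normal_finiteIndex_of_hom H _ (hψ (Pi.single ⟨0, hm0⟩ 1))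
    refine ⟨K, hKn, hKf, ?_⟩
    have hlt : K < H := by
      refine lt_of_le_of_ne (fun x hx => ((hK x).1 hx).1) ?_
      rintro rfl
      have h0 := hinj (Pi.single ⟨0, hm0⟩ 1) fun x hx => by simpa using ((hK x).1 hx).2 1
      simpa using congrFun h0 ⟨0, hm0⟩
    exact Nat.succ_le_of_lt (hN.trans_lt (Subgroup.index_strictAnti hlt))

/-- In a residually finite group, finitely many elements are separated by a normal subgroup of
finite index. -/
theorem exists_normal_finiteIndex_injOn {G : Type*} [Group G]
    (rf : ∀ g : G, g ≠ 1 → ∃ H : Subgroup G, H.Normal ∧ H.FiniteIndex ∧ g ∉ H)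
    (X : Finset G) : ∃ H : Subgroup G, H.Normal ∧ H.FiniteIndex ∧
      ∀ x ∈ X, ∀ y ∈ X, x⁻¹ * y ∈ H → x = y := by
  classical
  have key : ∀ Y : Finset G, ∃ H : Subgroup G, H.Normal ∧ H.FiniteIndex ∧
      ∀ g ∈ Y, g ∈ H → g = 1 := by
    intro Y
    induction Y using Finset.induction_on with
    | empty => exact ⟨⊤, inferInstance, inferInstance, by simp⟩
    | insert g Y _ ih =>
      obtain ⟨H, hn, hf, hH⟩ := ih
      by_cases hg : g = 1
      · refine ⟨H, hn, hf, fun x hx hxH => ?_⟩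
        rcases Finset.mem_insert.1 hx with rfl | hx
        exacts [hg, hH x hx hxH]
      · obtain ⟨L, hLn, hLf, hL⟩ := rf g hg
        refine ⟨H ⊓ L, inferInstance, inferInstance, fun x hx hxH => ?_⟩
        rcases Finset.mem_insert.1 hx with rfl | hx
        exacts [absurd hxH.2 hL, hH x hx hxH.1]
  obtain ⟨H, hn, hf, hH⟩ := key ((X ×ˢ X).image fun p => p.1⁻¹ * p.2)
  refine ⟨H, hn, hf, fun x hx y hy hxy => ?_⟩
  exact inv_mul_eq_one.1 (hH _ (Finset.mem_image.2 ⟨(x, y), by simp [hx, hy], rfl⟩) hxy)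

/-- A finitely generated residually finite group in which the number of independent homomorphisms
to `ZMod 2` grows linearly with the index is not unitarizable. -/
theorem not_unitarizable_of_hasIndependentHoms {G : Type} [Group G] (S : Finset G)
    (hS : Subgroup.closure (S : Set G) = ⊤)
    (rf : ∀ g : G, g ≠ 1 → ∃ H : Subgroup G, H.Normal ∧ H.FiniteIndex ∧ g ∉ H)
    (hom : ∀ H : Subgroup G, H.Normal → H.FiniteIndex →
      ∃ m, H.index ≤ 2 * m ∧ HasIndependentHoms H m) : ¬ Unitarizable G := by
  classical
  refine not_unitarizable_of_littlewoodDecomposition fun R => ?_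
  obtain ⟨N, hN⟩ := exists_nat_ge (4 * S.card * R)
  obtain ⟨K, hKn, hKf, hKN⟩ := exists_normal_index_ge hom (N + 1)
  obtain ⟨T, hTcard, hT⟩ := Subgroup.exists_finset_card_le_mul K hS
  obtain ⟨f, a, hd, hf1, -, hr⟩ := exists_littlewoodDecomposition_of_growth T hT
    ((K.index : ℝ) / 2) fun X => by
      obtain ⟨L, hLn, hLf, hL⟩ := exists_normal_finiteIndex_injOn rf (X.image K.subtype)
      obtain ⟨m, hm, ψ, hψ, hinj⟩ := hom (L ⊓ K) inferInstance inferInstance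
      refine ⟨(L ⊓ K).subgroupOf K, m, inferInstance, inferInstance, ⟨
        LinearMap.funLeft (ZMod 2) (ZMod 2) K.subtype ∘ₗ ψ, fun c x hx y hy => ?_,
        fun c hc => ?_⟩, fun x hx y hy hxy => ?_, ?_⟩
      · exact hψ c x hx y hy
      · exact hinj c fun x hx => hc ⟨x, hx.2⟩ hx
      · apply Subtype.ext
        refine hL _ (Finset.mem_image_of_mem _ hx) _ (Finset.mem_image_of_mem _ hy) ?_
        exact (Subgroup.mem_subgroupOf.1 (QuotientGroup.eq.1 hxy)).1
      · have h1 : (L ⊓ K).relIndex K * K.index = (L ⊓ K).index :=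
          Subgroup.relIndex_mul_index inf_le_right
        have h2 : ((L ⊓ K).subgroupOf K).index * K.index ≤ 2 * m := h1 ▸ hm
        have h3 : (((L ⊓ K).subgroupOf K).index : ℝ) * K.index ≤ 2 * m := by exact_mod_cast h2
        linarith
  obtain ⟨f', a', hd', hff', hf0⟩ := hd.exists_extension
  refine ⟨f', a', T.image K.subtype, hd', fun s => ?_, ?_⟩
  · by_cases hs : s ∈ K
    · exact (hff' ⟨s, hs⟩).trans_le (hf1 _)
    · rw [hf0 s hs]
      exact zero_le_one
  · rw [Finset.sum_image K.subtype_injective.injOn]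
    simp only [Subgroup.coe_subtype, hff']
    have hMpos : (0 : ℝ) < K.index := by
      exact_mod_cast Nat.pos_of_ne_zero hKf.index_ne_zero
    have hcs : (∑ s ∈ T, f s) ^ 2 ≤ T.card * ∑ s ∈ T, f s ^ 2 := sq_sum_le_card_mul_sum_sq
    have hTc : (T.card : ℝ) ≤ K.index * S.card := by exact_mod_cast hTcard
    have hq0 : 0 ≤ ∑ s ∈ T, f s ^ 2 := Finset.sum_nonneg fun s _ => sq_nonneg _
    have hMN : (N : ℝ) + 1 ≤ K.index := by exact_mod_cast hKN
    have h1 : ((K.index : ℝ) / 2) ^ 2 ≤ K.index * S.card * ∑ s ∈ T, f s ^ 2 :=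
      (pow_le_pow_left₀ (by positivity) hr 2).trans
        (hcs.trans (mul_le_mul_of_nonneg_right hTc hq0))
    have h2 : (K.index : ℝ) ≤ 4 * S.card * ∑ s ∈ T, f s ^ 2 := by
      refine le_of_mul_le_mul_left ?_ hMpos
      linarith
    by_contra! hlt
    have h3 : 4 * (S.card : ℝ) * ∑ s ∈ T, f s ^ 2 ≤ 4 * S.card * R :=
      mul_le_mul_of_nonneg_left hlt.le (by positivity)
    linarith

/-- Induction on right multiplication by generators. -/
theorem FreeGroup.forall_of_mul_of_iff {α : Type*} {P : FreeGroup α → Prop} (one : P 1)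
    (mul_of : ∀ x b, P (x * FreeGroup.of b) ↔ P x) (y : FreeGroup α) : P y := by
  suffices h : ∀ x, P (x * y) ↔ P x by simpa [one] using h 1
  induction y using FreeGroup.induction_on with
  | C1 => simp
  | of b => exact fun x => mul_of x b
  | inv_of b _ => exact fun x => by rw [← mul_of, inv_mul_cancel_right]
  | mul y z hy hz => exact fun x => by rw [← mul_assoc, hz, hy]

/-- A function on the edges of a Schreier graph of a free group integrates to a function on the
free group. -/
theorem FreeGroup.exists_integral {α Q U : Type*} [Group Q] [AddCommGroup U]
    (p : FreeGroup α →* Q) (e : Q → α → U) :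
    ∃ d : FreeGroup α → U, d 1 = 0 ∧ ∀ x b, d (x * FreeGroup.of b) = d x + e (p x) b := by
  let σ : α → Equiv.Perm (Q × U) := fun b =>
    { toFun := fun z => (z.1 * p (FreeGroup.of b), z.2 + e z.1 b)
      invFun := fun z =>
        (z.1 * (p (FreeGroup.of b))⁻¹, z.2 - e (z.1 * (p (FreeGroup.of b))⁻¹) b)
      left_inv := fun z => by simp
      right_inv := fun z => by simp }
  let ρ : FreeGroup α →* (Equiv.Perm (Q × U))ᵐᵒᵖ := FreeGroup.lift fun b => MulOpposite.op (σ b)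
  let state : FreeGroup α → Q × U := fun x => (ρ x).unop (1, 0)
  have hstate : ∀ x b, state (x * FreeGroup.of b) = σ b (state x) := fun x b => by
    simp [state, ρ]
  have hfst : ∀ x, (state x).1 = p x := by
    refine FreeGroup.forall_of_mul_of_iff (by simp [state]) fun x b => ?_
    rw [hstate, _root_.map_mul]
    exact mul_left_inj _
  refine ⟨fun x => (state x).2, by simp [state], fun x b => ?_⟩
  change (state (x * FreeGroup.of b)).2 = _
  rw [hstate, ← hfst]
  rfl

theorem map_conj_pow_eq_zero {G : Type*} [Group G] {H : Subgroup G} [H.Normal] {φ : G → ZMod 2}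
    (hφ : ∀ x ∈ H, ∀ y ∈ H, φ (x * y) = φ x + φ y) {v : G} (hv : v ∈ H) (x : G) :
    φ (x * v ^ 2 * x⁻¹) = 0 := by
  have hm : x * v * x⁻¹ ∈ H := Subgroup.Normal.conj_mem inferInstance v hv x
  have : x * v ^ 2 * x⁻¹ = x * v * x⁻¹ * (x * v * x⁻¹) := by rw [pow_two]; group
  rw [this, hφ _ hm _ hm, CharTwo.add_self_eq_zero]

theorem map_conj_eq {G : Type*} [Group G] {H : Subgroup G} {φ : G → ZMod 2}
    (hφ : ∀ x ∈ H, ∀ y ∈ H, φ (x * y) = φ x + φ y) {h v : G} (hh : h ∈ H) (hv : v ∈ H) :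
    φ (h * v * h⁻¹) = φ v := by
  have h1 := hφ _ (mul_mem (mul_mem hh hv) (inv_mem hh)) _ hh
  rw [inv_mul_cancel_right, hφ h hh v hv, add_comm] at h1
  exact (add_right_cancel h1).symm

/-- The homomorphisms from `H` to `ZMod 2` that vanish on all conjugates of `w ^ (2 * 2 ^ k)` are cut
out by few linear conditions. -/
theorem exists_few_conjugates_of_pow {G : Type*} [Group G] {H : Subgroup G} [H.Normal]
    [H.FiniteIndex] {w : G} {k : ℕ} (hw : w ^ (2 * 2 ^ k) ∈ H) :
    ∃ R : Finset G, R.card * (2 * 2 ^ k) ≤ H.index ∧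
      ∀ φ : G → ZMod 2, (∀ x ∈ H, ∀ y ∈ H, φ (x * y) = φ x + φ y) →
        (∀ x ∈ R, φ (x * w ^ (2 * 2 ^ k) * x⁻¹) = 0) →
        ∀ x, φ (x * w ^ (2 * 2 ^ k) * x⁻¹) = 0 := by
  classical
  by_cases hord : w ^ 2 ^ k ∈ H
  · refine ⟨∅, by simp, fun φ hφ _ x => ?_⟩
    rw [mul_comm 2, pow_mul]
    exact map_conj_pow_eq_zero hφ hord x
  have := Fintype.ofFinite (G ⧸ H)
  let Z : Subgroup (G ⧸ H) := Subgroup.zpowers (w : G ⧸ H)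
  have hZ : Nat.card Z = 2 * 2 ^ k := by
    rw [Nat.card_zpowers, mul_comm, ← pow_succ]
    refine orderOf_eq_prime_pow ?_ ?_
    · rwa [← QuotientGroup.mk_pow, QuotientGroup.eq_one_iff]
    · rwa [← QuotientGroup.mk_pow, QuotientGroup.eq_one_iff, pow_succ, mul_comm]
  have := Fintype.ofFinite ((G ⧸ H) ⧸ Z)
  refine ⟨Finset.univ.image fun y : (G ⧸ H) ⧸ Z => Quotient.out (Quotient.out y), ?_, ?_⟩
  · have h1 : Z.index * Nat.card Z = Nat.card (G ⧸ H) := Z.index_mul_card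
    rw [hZ, Subgroup.index_eq_card, ← Subgroup.index_eq_card H] at h1
    rw [← h1]
    refine Nat.mul_le_mul_right _ (Finset.card_image_le.trans_eq ?_)
    rw [Finset.card_univ, Nat.card_eq_fintype_card]
  · intro φ hφ hR x
    let y : (G ⧸ H) ⧸ Z := ((x : G ⧸ H) : (G ⧸ H) ⧸ Z)
    have hy : (Quotient.out y)⁻¹ * (x : G ⧸ H) ∈ Z := QuotientGroup.eq.1 (Quotient.out_eq' y)
    obtain ⟨j, hj⟩ := Subgroup.mem_zpowers_iff.1 hy
    let g : G := Quotient.out (Quotient.out y)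
    have hg : (g : G ⧸ H) = Quotient.out y := Quotient.out_eq' _
    have hx : x * (g * w ^ j)⁻¹ ∈ H := by
      rw [← QuotientGroup.eq_one_iff, QuotientGroup.mk_mul, QuotientGroup.mk_inv,
        QuotientGroup.mk_mul, QuotientGroup.mk_zpow, hg, hj, mul_inv_cancel_left, mul_inv_cancel]
    have hconj : g * w ^ (2 * 2 ^ k) * g⁻¹ ∈ H := Subgroup.Normal.conj_mem inferInstance _ hw g
    have heq : x * w ^ (2 * 2 ^ k) * x⁻¹ = x * (g * w ^ j)⁻¹ * (g * w ^ (2 * 2 ^ k) * g⁻¹) *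
        (x * (g * w ^ j)⁻¹)⁻¹ := by
      have hc : w ^ j * w ^ (2 * 2 ^ k) * (w ^ j)⁻¹ = w ^ (2 * 2 ^ k) := by
        rw [mul_inv_eq_iff_eq_mul, ← zpow_natCast, ← zpow_add, ← zpow_add, add_comm]
      have hc' : (w ^ j)⁻¹ * w ^ (2 * 2 ^ k) * w ^ j = w ^ (2 * 2 ^ k) := by
        nth_rewrite 1 [← hc]
        group
      calc x * w ^ (2 * 2 ^ k) * x⁻¹ = x * ((w ^ j)⁻¹ * w ^ (2 * 2 ^ k) * w ^ j) * x⁻¹ := by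
            rw [hc']
        _ = _ := by
            generalize w ^ (2 * 2 ^ k) = r
            group
    rw [heq, map_conj_eq hφ hx hconj]
    exact hR g (Finset.mem_image_of_mem _ (Finset.mem_univ y))

/-- A subgroup `H` of finite index in a free group on two letters that contains `w i ^ 2 ^ (i + 2)`
for all `i` has many independent homomorphisms to `ZMod 2` that vanish on all conjugates of these
elements. -/
theorem FreeGroup.exists_independent_homs (w : ℕ → FreeGroup Bool) (H : Subgroup (FreeGroup Bool))
    [H.Normal] [H.FiniteIndex] (hw : ∀ i, w i ^ (2 * 2 ^ (i + 1)) ∈ H) :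
    ∃ m, H.index ≤ 2 * m ∧ ∃ ψ : (Fin m → ZMod 2) →ₗ[ZMod 2] (FreeGroup Bool → ZMod 2),
      (∀ c, ∀ x ∈ H, ∀ y ∈ H, ψ c (x * y) = ψ c x + ψ c y) ∧
      (∀ c, (∀ x ∈ H, ψ c x = 0) → c = 0) ∧
      ∀ c i x, ψ c (x * w i ^ (2 * 2 ^ (i + 1)) * x⁻¹) = 0 := by
  classical
  have := Fintype.ofFinite (FreeGroup Bool ⧸ H)
  let Q := FreeGroup Bool ⧸ H
  let V := Q × Bool → ZMod 2
  obtain ⟨d, hd1, hd⟩ := FreeGroup.exists_integral (QuotientGroup.mk' H)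
    (fun q b => (LinearMap.proj (q, b) : V →ₗ[ZMod 2] ZMod 2))
  let Φ : V →ₗ[ZMod 2] (FreeGroup Bool → ZMod 2) := LinearMap.pi d
  have hΦ : ∀ c x, Φ c x = d x c := fun _ _ => rfl
  have hadd : ∀ c, ∀ h ∈ H, ∀ x, Φ c (h * x) = Φ c h + Φ c x := by
    intro c h hh x
    suffices d (h * x) = d h + d x by rw [hΦ, this]; rfl
    refine FreeGroup.forall_of_mul_of_iff (P := fun x => d (h * x) = d h + d x) (by simp [hd1])
      (fun x b => ?_) x
    have hq : QuotientGroup.mk' H (h * x) = QuotientGroup.mk' H x := by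
      rw [_root_.map_mul, QuotientGroup.mk'_apply, (QuotientGroup.eq_one_iff h).2 hh, one_mul]
    rw [← mul_assoc, hd, hd, hq, ← add_assoc, add_left_inj]
  have hmul : ∀ c, ∀ x ∈ H, ∀ y ∈ H, Φ c (x * y) = Φ c x + Φ c y := fun c x hx y _ => hadd c x hx y
  let B : Submodule (ZMod 2) V :=
    { carrier := {c | ∀ x ∈ H, Φ c x = 0}
      zero_mem' := fun x _ => by simp
      add_mem' := fun {a b} ha hb x hx => by simp [ha x hx, hb x hx]
      smul_mem' := fun a c hc x hx => by simp [hc x hx] }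
  let σ : Q → FreeGroup Bool := Quotient.out
  have hB : Module.finrank (ZMod 2) B ≤ H.index := by
    have hinj : Function.Injective
        (LinearMap.funLeft (ZMod 2) (ZMod 2) σ ∘ₗ Φ ∘ₗ B.subtype) := by
      rw [injective_iff_map_eq_zero]
      rintro ⟨c, hc⟩ h0
      have hz : ∀ x, Φ c x = 0 := by
        intro x
        have hx : x * (σ x)⁻¹ ∈ H := by
          rw [← QuotientGroup.eq_one_iff, QuotientGroup.mk_mul, QuotientGroup.mk_inv]
          exact mul_inv_eq_one.2 (Quotient.out_eq' (x : Q)).symm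
        have h1 := hadd c _ hx (σ x)
        rw [inv_mul_cancel_right, hc _ hx, zero_add] at h1
        exact h1.trans (congrFun h0 (x : Q))
      refine Subtype.ext (funext fun ⟨q, b⟩ => ?_)
      obtain ⟨x, rfl⟩ := QuotientGroup.mk_surjective q
      have h2 := congrArg (fun l => l c) (hd x b)
      have h3 := hz (x * FreeGroup.of b)
      have h4 := hz x
      rw [hΦ] at h3 h4
      simp only [LinearMap.add_apply, h3, h4, zero_add] at h2
      exact h2.symm
    have := LinearMap.finrank_le_finrank_of_injective hinj
    rwa [Module.finrank_fintype_fun_eq_card, ← Nat.card_eq_fintype_card,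
      ← Subgroup.index_eq_card] at this
  obtain ⟨W, hW⟩ := B.exists_isCompl
  have hVrank : Module.finrank (ZMod 2) V = 2 * H.index := by
    rw [Module.finrank_fintype_fun_eq_card, Fintype.card_prod, Fintype.card_bool, mul_comm,
      Subgroup.index_eq_card, Nat.card_eq_fintype_card]
  have hWrank : H.index ≤ Module.finrank (ZMod 2) W := by
    have := Submodule.finrank_add_eq_of_isCompl hW
    omega
  choose R hRcard hR using fun i => exists_few_conjugates_of_pow (hw i)
  let J := Σ i : Fin H.index, R i
  have hJ : 2 * Fintype.card J ≤ H.index := by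
    have h1 : (Fintype.card J : ℝ) = ∑ i ∈ Finset.range H.index, ((R i).card : ℝ) := by
      rw [← Fin.sum_univ_eq_sum_range fun i => ((R i).card : ℝ)]
      simp [J]
    have h2 : ∀ i, ((R i).card : ℝ) ≤ H.index / 4 * (1 / 2) ^ i := by
      intro i
      have h3 : ((R i).card : ℝ) * (2 * 2 ^ (i + 1)) ≤ H.index := by exact_mod_cast hRcard i
      rw [one_div, inv_pow, ← div_eq_mul_inv, le_div_iff₀ (by positivity)]
      rw [pow_succ] at h3
      linarith
    have h3 : (Fintype.card J : ℝ) ≤ H.index / 4 * 2 := by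
      rw [h1]
      refine (Finset.sum_le_sum fun i _ => h2 i).trans ?_
      rw [← Finset.mul_sum]
      exact mul_le_mul_of_nonneg_left (sum_geometric_two_le _) (by positivity)
    have h4 : (2 : ℝ) * Fintype.card J ≤ H.index := by linarith
    exact_mod_cast h4
  let L : W →ₗ[ZMod 2] (J → ZMod 2) :=
    LinearMap.funLeft (ZMod 2) (ZMod 2)
      (fun j : J => (j.2 : FreeGroup Bool) * w j.1 ^ (2 * 2 ^ ((j.1 : ℕ) + 1)) *
        (j.2 : FreeGroup Bool)⁻¹) ∘ₗ Φ ∘ₗ W.subtype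
  have hLrank := L.finrank_range_add_finrank_ker
  have hLrange : Module.finrank (ZMod 2) (LinearMap.range L) ≤ Fintype.card J := by
    simpa using Submodule.finrank_le (LinearMap.range L)
  let E := (Module.finBasis (ZMod 2) (LinearMap.ker L)).equivFun.symm
  refine ⟨Module.finrank (ZMod 2) (LinearMap.ker L), by omega,
    Φ ∘ₗ W.subtype ∘ₗ (LinearMap.ker L).subtype ∘ₗ E.toLinearMap, fun c => hmul _, ?_, ?_⟩
  · intro c hc
    have h1 : ((E c : W) : V) ∈ B ⊓ W := ⟨hc, (E c : W).2⟩
    rw [hW.inf_eq_bot, Submodule.mem_bot] at h1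
    refine E.map_eq_zero_iff.1 (Subtype.ext (Subtype.ext h1))
  · intro c i x
    refine hR i _ (hmul _) (fun y hy => ?_) x
    by_cases hi : i < H.index
    · exact congrFun (E c).2 ⟨⟨i, hi⟩, ⟨y, hy⟩⟩
    · have hpos : 0 < (R i).card := Finset.card_pos.2 ⟨y, hy⟩
      have h1 : i < 2 ^ i := Nat.lt_two_pow_self
      have h2 := hRcard i
      have h3 : 2 ^ i ≤ (R i).card * (2 * 2 ^ (i + 1)) := by
        rw [pow_succ]
        nlinarith
      omega

/-- The intersection of all normal subgroups of finite index containing `w i ^ 2 ^ (i + 2)` for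
all `i`. -/
def powerResidual {F : Type*} [Group F] (w : ℕ → F) : Subgroup F :=
  sInf {H | H.Normal ∧ H.FiniteIndex ∧ ∀ i, w i ^ (2 * 2 ^ (i + 1)) ∈ H}

theorem mem_powerResidual {F : Type*} [Group F] {w : ℕ → F} {x : F} :
    x ∈ powerResidual w ↔ ∀ H : Subgroup F, H.Normal → H.FiniteIndex →
      (∀ i, w i ^ (2 * 2 ^ (i + 1)) ∈ H) → x ∈ H := by
  simp only [powerResidual, Subgroup.mem_sInf, Set.mem_ofPred_eq, and_imp]

instance {F : Type*} [Group F] (w : ℕ → F) : (powerResidual w).Normal :=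
  ⟨fun x hx g => mem_powerResidual.2 fun H hn hf hH =>
    hn.conj_mem x (mem_powerResidual.1 hx H hn hf hH) g⟩

theorem exists_normal_not_mem_quotient_powerResidual {F : Type*} [Group F] (w : ℕ → F)
    (g : F ⧸ powerResidual w) (hg : g ≠ 1) :
    ∃ H : Subgroup (F ⧸ powerResidual w), H.Normal ∧ H.FiniteIndex ∧ g ∉ H := by
  obtain ⟨x, rfl⟩ := QuotientGroup.mk_surjective g
  rw [ne_eq, QuotientGroup.eq_one_iff, mem_powerResidual] at hg
  push Not at hg
  obtain ⟨H, hn, hf, hH, hx⟩ := hg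
  have hker : (QuotientGroup.mk' (powerResidual w)).ker ≤ H := by
    rw [QuotientGroup.ker_mk']
    exact fun y hy => mem_powerResidual.1 hy H hn hf hH
  have hsurj := QuotientGroup.mk'_surjective (powerResidual w)
  refine ⟨H.map (QuotientGroup.mk' _), hn.map _ hsurj, ⟨?_⟩, ?_⟩
  · rw [Subgroup.index_map_eq _ hsurj hker]
    exact hf.index_ne_zero
  · intro hmem
    have : x ∈ (H.map (QuotientGroup.mk' (powerResidual w))).comap (QuotientGroup.mk' _) := hmem
    rw [Subgroup.comap_map_eq_self hker] at this
    exact hx this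

theorem hasIndependentHoms_quotient_powerResidual (w : ℕ → FreeGroup Bool)
    (H : Subgroup (FreeGroup Bool ⧸ powerResidual w)) (hn : H.Normal) (hf : H.FiniteIndex) :
    ∃ m, H.index ≤ 2 * m ∧ HasIndependentHoms H m := by
  let p := QuotientGroup.mk' (powerResidual w)
  have hsurj : Function.Surjective p := QuotientGroup.mk'_surjective _
  have hidx : (H.comap p).index = H.index := Subgroup.index_comap_of_surjective _ hsurj
  have hf' : (H.comap p).FiniteIndex := ⟨hidx ▸ hf.index_ne_zero⟩
  have hres : ∀ x ∈ powerResidual w, x ∈ H.comap p := fun x hx => by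
    have : p x = 1 := (QuotientGroup.eq_one_iff x).2 hx
    rw [Subgroup.mem_comap, this]
    exact one_mem H
  obtain ⟨m, hm, ψ, hmul, hinj, hzero⟩ := FreeGroup.exists_independent_homs w (H.comap p)
    fun i => hres _ (mem_powerResidual.2 fun L _ _ hL => hL i)
  have hψ0 : ∀ c, ∀ x ∈ powerResidual w, ψ c x = 0 := by
    intro c x hx
    obtain ⟨N, hNn, hNf, hN⟩ := exists_normal_finiteIndex_of_hom (H.comap p) (ψ c) (hmul c)
    have hxN := mem_powerResidual.1 hx N hNn hNf fun i => (hN _).2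
      ⟨hres _ (mem_powerResidual.2 fun L _ _ hL => hL i), hzero c i⟩
    simpa using ((hN x).1 hxN).2 1
  let σ : FreeGroup Bool ⧸ powerResidual w → FreeGroup Bool := Quotient.out
  have hσ : ∀ q, p (σ q) = q := fun q => Quotient.out_eq' q
  have hψeq : ∀ c, ∀ x ∈ H.comap p, ψ c (σ (p x)) = ψ c x := by
    intro c x hx
    have h1 : x⁻¹ * σ (p x) ∈ powerResidual w := by
      rw [← QuotientGroup.eq_one_iff]
      change p (x⁻¹ * σ (p x)) = 1
      rw [map_mul, hσ, map_inv, inv_mul_cancel]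
    have h2 := hmul c x hx _ (hres _ h1)
    rwa [mul_inv_cancel_left, hψ0 c _ h1, add_zero] at h2
  refine ⟨m, hidx ▸ hm, LinearMap.funLeft (ZMod 2) (ZMod 2) σ ∘ₗ ψ, fun c x hx y hy => ?_,
    fun c hc => hinj c fun x hx => ?_⟩
  · obtain ⟨x, rfl⟩ := hsurj x
    obtain ⟨y, rfl⟩ := hsurj y
    change ψ c (σ (p x * p y)) = ψ c (σ (p x)) + ψ c (σ (p y))
    rw [← map_mul, hψeq c _ (mul_mem hx hy), hψeq c x hx, hψeq c y hy, hmul c x hx y hy]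
  · rw [← hψeq c x hx]
    exact hc (p x) hx

/-- There exists a finitely generated torsion group that is not unitarizable. -/
theorem exists_fg_torsion_not_unitarizable :
    ∃ (G : Type) (_ : Group G), Group.FG G ∧ Monoid.IsTorsion G ∧ ¬ Unitarizable G := by
  classical
  have : Countable (FreeGroup Bool) :=
    Function.Injective.countable FreeGroup.toWord_injective
  obtain ⟨w, hw⟩ := exists_surjective_nat (FreeGroup Bool)
  let p := QuotientGroup.mk' (powerResidual w)
  have hS : Subgroup.closure
      ((Finset.univ.image fun b : Bool => p (FreeGroup.of b) : Finset _) :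
        Set (FreeGroup Bool ⧸ powerResidual w)) = ⊤ := by
    rw [Finset.coe_image, Finset.coe_univ, Set.image_univ, Set.range_comp',
      ← MonoidHom.map_closure, FreeGroup.closure_range_of, ← MonoidHom.range_eq_map,
      MonoidHom.range_eq_top]
    exact QuotientGroup.mk'_surjective _
  refine ⟨FreeGroup Bool ⧸ powerResidual w, inferInstance, ⟨⟨_, hS⟩⟩, fun g => ?_,
    not_unitarizable_of_hasIndependentHoms _ hS (exists_normal_not_mem_quotient_powerResidual w)
      (hasIndependentHoms_quotient_powerResidual w)⟩
  obtain ⟨x, rfl⟩ := QuotientGroup.mk_surjective g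
  obtain ⟨i, rfl⟩ := hw x
  refine isOfFinOrder_iff_pow_eq_one.2 ⟨2 * 2 ^ (i + 1), by positivity, ?_⟩
  rw [← QuotientGroup.mk_pow, QuotientGroup.eq_one_iff]
  exact mem_powerResidual.2 fun H _ _ hH => hH i
end

section
/- Let G be a group and H a normal subgroup of G such that H contains no non-abelian free subgroup and the quotient group G/H is a torsion group. Then G contains no non-abelian free subgroup. -/
open scoped Function Pointwise

namespace FreeGroup

variable {α : Type*} [DecidableEq α]

theorem mk_singleton_pow_mul_mem_startsWith {w : α × Bool} {n : ℕ} (hn : 0 < n)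
    (g : FreeGroup α) (h : g ∉ startsWith (w.1, !w.2)) : mk [w] ^ n * g ∈ startsWith w := by
  induction n, hn using Nat.le_induction with
  | base => simpa using startsWith_mk_mul g h
  | succ n _ ih =>
    rw [pow_succ', mul_assoc]
    refine startsWith_mk_mul _ fun h' => ?_
    have hdisj : Disjoint (startsWith w) (startsWith (w.1, !w.2)) := by
      simp [Prod.ext_iff]
    exact Set.disjoint_left.mp hdisj ih h'

/-- Positive powers of the generators of a free group freely generate a subgroup. -/
theorem lift_of_pow_injective [Nontrivial α] (k : α → ℕ) (hk : ∀ i, 0 < k i) :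
    Function.Injective (lift fun i => of i ^ k i) := by
  refine injective_lift_of_ping_pong (fun i => of i ^ k i)
    (fun i => startsWith (i, true)) (fun i => startsWith (i, false)) ?_ ?_ ?_ ?_ ?_ ?_
  · exact fun i => ⟨of i, by simp [startsWith]⟩
  · exact fun i j hij => by simpa using hij
  · exact fun i j hij => by simpa using hij
  · simp
  · rintro i _ ⟨g, hg, rfl⟩
    exact mk_singleton_pow_mul_mem_startsWith (w := (i, true)) (hk i) g hg
  · rintro i _ ⟨g, hg, rfl⟩
    have h := mk_singleton_pow_mul_mem_startsWith (w := (i, false)) (hk i) g hg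
    have hinv : mk [(i, false)] = (of i)⁻¹ := rfl
    rwa [hinv, inv_pow] at h

end FreeGroup

/-- Let `G` be a group and `H` a normal subgroup of `G` such that `H` contains no
non-abelian free subgroup and the quotient `G/H` is a torsion group. Then `G`
contains no non-abelian free subgroup. -/
theorem no_free_subgroup_of_normal_of_torsion_quotient {G : Type*} [Group G]
    (H : Subgroup G) [H.Normal]
    (hH : ¬ ∃ K : Subgroup H, Nonempty (K ≃* FreeGroup (Fin 2)))
    (hq : Monoid.IsTorsion (G ⧸ H)) :
    ¬ ∃ K : Subgroup G, Nonempty (K ≃* FreeGroup (Fin 2)) := by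
  rintro ⟨K, ⟨e⟩⟩
  let φ : FreeGroup (Fin 2) →* G := K.subtype.comp e.symm.toMonoidHom
  have hφ : Function.Injective φ := K.subtype_injective.comp e.symm.injective
  have hpow (i : Fin 2) : ∃ n : ℕ, 0 < n ∧ φ (FreeGroup.of i) ^ n ∈ H := by
    obtain ⟨n, hn, h⟩ := isOfFinOrder_iff_pow_eq_one.mp (hq (φ (FreeGroup.of i) : G ⧸ H))
    exact ⟨n, hn, (QuotientGroup.eq_one_iff _).mp h⟩
  choose k hk hkH using hpow
  let ψ : FreeGroup (Fin 2) →* H := FreeGroup.lift fun i => ⟨φ (FreeGroup.of i) ^ k i, hkH i⟩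
  have hψ : H.subtype.comp ψ = φ.comp (FreeGroup.lift fun i => FreeGroup.of i ^ k i) := by
    ext i
    simp [ψ]
  have hinj : Function.Injective ψ := by
    refine Function.Injective.of_comp (f := H.subtype) ?_
    rw [← MonoidHom.coe_comp, hψ]
    exact hφ.comp (FreeGroup.lift_of_pow_injective k hk)
  exact hH ⟨ψ.range, ⟨(MonoidHom.ofInjective hinj).symm⟩⟩
end

section
/- Let F be a free group (on an arbitrary set of generators). If F contains a nontrivial normal subgroup C that is cyclic, then F is infinite cyclic (isomorphic to the integers). In particular, a non-abelian free group has no nontrivial normal cyclic subgroup. -/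
/-- In a group with unique roots, a normal cyclic subgroup is central. -/
theorem Subgroup.Normal.le_center_of_isCyclic_of_isMulTorsionFree {G : Type*} [Group G]
    [IsMulTorsionFree G] {C : Subgroup G} (hnorm : C.Normal) (hcyc : IsCyclic C) :
    C ≤ Subgroup.center G := by
  obtain ⟨c, rfl⟩ := (Subgroup.isCyclic_iff_exists_zpowers_eq_top C).1 hcyc
  rw [Subgroup.zpowers_le, Subgroup.mem_center_iff]
  intro g
  rcases eq_or_ne c 1 with rfl | hc
  · simp
  obtain ⟨n, hn⟩ := Subgroup.mem_zpowers_iff.1 (hnorm.conj_mem c (Subgroup.mem_zpowers c) g)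
  obtain ⟨m, hm⟩ := Subgroup.mem_zpowers_iff.1 (hnorm.conj_mem c (Subgroup.mem_zpowers c) g⁻¹)
  have hnm : c ^ (n * m) = c ^ (1 : ℤ) := by
    rw [zpow_mul, hn, conj_zpow, hm]
    group
  have hsq : n * n = 1 := by
    rcases Int.mul_eq_one_iff_eq_one_or_neg_one.1
        (injective_zpow_iff_not_isOfFinOrder.2 (not_isOfFinOrder_of_isMulTorsionFree hc) hnm) with h | h <;>
      simp [h.1]
  have hconj : g ^ 2 * c * (g ^ 2)⁻¹ = c := by
    calc g ^ 2 * c * (g ^ 2)⁻¹ = g * (g * c * g⁻¹) * g⁻¹ := by simp only [pow_two, mul_inv_rev, mul_assoc]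
      _ = c ^ (n * n) := by rw [← hn, ← conj_zpow, ← hn, zpow_mul]
      _ = c := by rw [hsq, zpow_one]
  have hroot : (c * g * c⁻¹) ^ 2 = g ^ 2 := by
    rw [conj_pow, mul_inv_eq_iff_eq_mul, ← mul_inv_eq_iff_eq_mul.1 hconj]
  exact (mul_inv_eq_iff_eq_mul.1 (pow_left_injective two_ne_zero hroot)).symm

/-- The center of a free group on at least two generators is trivial. -/
theorem FreeGroup.center_eq_bot {X : Type*} [Nontrivial X] :
    Subgroup.center (FreeGroup X) = ⊥ := by
  classical
  rw [eq_bot_iff]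
  intro c hc
  rw [Subgroup.mem_bot, ← FreeGroup.toWord_eq_nil_iff]
  by_contra hw
  obtain ⟨p, w, hpw⟩ := List.exists_cons_of_ne_nil hw
  obtain ⟨q, hq⟩ := exists_ne p.1
  have hleft : (FreeGroup.of q * c).toWord = (q, true) :: c.toWord := by
    have hred : FreeGroup.IsReduced ((q, true) :: c.toWord) := by
      rw [hpw, FreeGroup.isReduced_cons_cons, ← hpw]
      exact ⟨fun h => absurd h hq, FreeGroup.isReduced_toWord⟩
    simpa [FreeGroup.toWord_mul] using hred.reduce_eq
  have hright := FreeGroup.toWord_mul_sublist c (FreeGroup.of q)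
  rw [← Subgroup.mem_center_iff.1 hc, hleft, FreeGroup.toWord_of] at hright
  have heq := hright.eq_of_length (by simp)
  rw [hpw, List.cons_append, List.cons.injEq] at heq
  exact hq (congrArg Prod.fst heq.1)


/-- If a free group `F = FreeGroup X` contains a nontrivial normal cyclic subgroup,
then `F` is infinite cyclic, i.e. isomorphic to the (multiplicative) group of integers. -/
theorem freeGroup_infinite_cyclic_of_nontrivial_normal_cyclic_subgroup
    {X : Type*} (C : Subgroup (FreeGroup X)) (hnorm : C.Normal) (hnt : C ≠ ⊥)
    (hcyc : IsCyclic C) :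
    Nonempty (FreeGroup X ≃* Multiplicative ℤ) := by
  have hcenter := hnorm.le_center_of_isCyclic_of_isMulTorsionFree hcyc
  rcases isEmpty_or_nonempty X with hX | ⟨⟨x⟩⟩
  · exact absurd (Subsingleton.elim C ⊥) hnt
  rcases subsingleton_or_nontrivial X with hX | hX
  · have : Unique X := uniqueOfSubsingleton x
    exact ⟨FreeGroup.mulEquivIntOfUnique⟩
  · exact absurd (le_bot_iff.1 (FreeGroup.center_eq_bot (X := X) ▸ hcenter)) hnt
end

section
/- Every countable torsion group embeds into a torsion group generated by 2 elements; that is, for every countable torsion group T there exist a torsion group Q generated by two elements and an injective group homomorphism from T into Q. -/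
namespace GuptaSidki

/-- Vertices of the rooted ternary tree. -/
abbrev Vertex := List (ZMod 3)

/-- Cyclic rotation of the first letter by `e`. -/
def rotFun (e : ZMod 3) : Vertex → Vertex
  | [] => []
  | x :: w => (x + e) :: w

/-- The `e`-th power of the directed automorphism `b = (b, a, a⁻¹)`. -/
def dirFun (e : ZMod 3) : Vertex → Vertex
  | [] => []
  | x :: w => x :: if x = 0 then dirFun e w else rotFun (e * x) w

lemma rotFun_rotFun (e e' : ZMod 3) (w : Vertex) :
    rotFun e (rotFun e' w) = rotFun (e + e') w := by
  cases w <;> simp [rotFun]; ring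

lemma rotFun_zero (w : Vertex) : rotFun 0 w = w := by
  cases w <;> simp [rotFun]

lemma dirFun_dirFun (e e' : ZMod 3) (w : Vertex) :
    dirFun e (dirFun e' w) = dirFun (e + e') w := by
  induction w with
  | nil => rfl
  | cons x w ih =>
    by_cases hx : x = 0
    · simp [dirFun, hx, ih]
    · simp [dirFun, hx, rotFun_rotFun, add_mul]

lemma dirFun_zero (w : Vertex) : dirFun 0 w = w := by
  induction w with
  | nil => rfl
  | cons x w ih => simp [dirFun, ih, rotFun_zero]

/-- The rooted automorphism `a ^ e`. -/
def rot (e : ZMod 3) : Equiv.Perm Vertex where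
  toFun := rotFun e
  invFun := rotFun (-e)
  left_inv w := by simp [rotFun_rotFun, rotFun_zero]
  right_inv w := by simp [rotFun_rotFun, rotFun_zero]

/-- The directed automorphism `b ^ e`. -/
def dir (e : ZMod 3) : Equiv.Perm Vertex where
  toFun := dirFun e
  invFun := dirFun (-e)
  left_inv w := by simp [dirFun_dirFun, dirFun_zero]
  right_inv w := by simp [dirFun_dirFun, dirFun_zero]

lemma rot_mul (e e' : ZMod 3) : rot e * rot e' = rot (e + e') :=
  Equiv.ext fun w => rotFun_rotFun e e' w

lemma rot_zero : rot 0 = 1 := Equiv.ext rotFun_zero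

lemma dir_mul (e e' : ZMod 3) : dir e * dir e' = dir (e + e') :=
  Equiv.ext fun w => dirFun_dirFun e e' w

lemma dir_zero : dir 0 = 1 := Equiv.ext dirFun_zero

lemma rot_pow_three (e : ZMod 3) : rot e ^ 3 = 1 := by
  rw [pow_three, rot_mul, rot_mul, ← rot_zero]
  congr 1; revert e; decide

lemma dir_pow_three (e : ZMod 3) : dir e ^ 3 = 1 := by
  rw [pow_three, dir_mul, dir_mul, ← dir_zero]
  congr 1; revert e; decide

/-- The tree automorphism with sections `s` and rotation `k` at the root. -/
def node (s : ZMod 3 → Equiv.Perm Vertex) (k : ZMod 3) : Equiv.Perm Vertex where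
  toFun
    | [] => []
    | x :: w => (x + k) :: s x w
  invFun
    | [] => []
    | x :: w => (x - k) :: (s (x - k)).symm w
  left_inv w := by cases w <;> simp
  right_inv w := by cases w <;> simp

lemma node_nil (s : ZMod 3 → Equiv.Perm Vertex) (k : ZMod 3) : node s k [] = [] := rfl

lemma node_cons (s : ZMod 3 → Equiv.Perm Vertex) (k x : ZMod 3) (w : Vertex) :
    node s k (x :: w) = (x + k) :: s x w := rfl

lemma node_mul (s s' : ZMod 3 → Equiv.Perm Vertex) (k k' : ZMod 3) :
    node s k * node s' k' = node (fun x => s (x + k') * s' x) (k + k') := by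
  ext1 w
  cases w with
  | nil => rfl
  | cons x w => simp [node_cons]; ring

lemma node_one : node 1 0 = 1 := by
  ext1 w
  cases w <;> simp [node_cons, node_nil]

lemma node_inj {s s' : ZMod 3 → Equiv.Perm Vertex} {k k' : ZMod 3}
    (h : node s k = node s' k') : s = s' ∧ k = k' := by
  have key : ∀ x w, (x + k) :: s x w = (x + k') :: s' x w := fun x w =>
    DFunLike.congr_fun h (x :: w)
  refine ⟨funext fun x => Equiv.ext fun w => (List.cons.inj (key x w)).2, ?_⟩
  simpa using (List.cons.inj (key 0 [])).1

lemma node_pow (s : ZMod 3 → Equiv.Perm Vertex) (n : ℕ) : node s 0 ^ n = node (s ^ n) 0 := by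
  induction n with
  | zero => simp [node_one]
  | succ n ih =>
    rw [pow_succ, ih, node_mul, add_zero]
    congr 1
    funext x
    simp [pow_succ]

lemma node_cube (s : ZMod 3 → Equiv.Perm Vertex) (k : ZMod 3) :
    node s k ^ 3 = node (fun x => s (x + (k + k)) * (s (x + k) * s x)) 0 := by
  rw [pow_three, node_mul, node_mul]
  congr 1
  revert k; decide

/-- The sections of `dir e`. -/
def dirSection (e x : ZMod 3) : Equiv.Perm Vertex := if x = 0 then dir e else rot (e * x)

lemma rot_eq_node (e : ZMod 3) : rot e = node 1 e := by
  ext1 w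
  cases w <;> rfl

lemma dir_eq_node (e : ZMod 3) : dir e = node (dirSection e) 0 := by
  ext1 w
  cases w with
  | nil => rfl
  | cons x w =>
    rw [node_cons, add_zero]
    by_cases hx : x = 0 <;> simp [dir, dirFun, dirSection, hx, rot]

/-- `Syll n k g`: `g` is a product of rotations with exponents summing to `k` and `n` powers of the
directed automorphism. -/
inductive Syll : ℕ → ZMod 3 → Equiv.Perm Vertex → Prop
  | one : Syll 0 0 1
  | rot_mul {n k g} (e : ZMod 3) : Syll n k g → Syll n (e + k) (rot e * g)
  | dir_mul {n k g} (e : ZMod 3) : Syll n k g → Syll (n + 1) k (dir e * g)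

namespace Syll

lemma rot (e : ZMod 3) : Syll 0 e (rot e) := by
  simpa using Syll.one.rot_mul e

lemma dir (e : ZMod 3) : Syll 1 0 (dir e) := by
  simpa using Syll.one.dir_mul e

lemma mul {n m : ℕ} {k l : ZMod 3} {g h : Equiv.Perm Vertex} (hg : Syll n k g) (hh : Syll m l h) :
    Syll (n + m) (k + l) (g * h) := by
  induction hg with
  | one => simpa using hh
  | rot_mul e _ ih => simpa [mul_assoc, add_assoc] using ih.rot_mul e
  | dir_mul e _ ih => simpa [mul_assoc, add_right_comm] using ih.dir_mul e

lemma sections {n : ℕ} {k : ZMod 3} {g : Equiv.Perm Vertex} (hg : Syll n k g) :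
    ∃ (s : ZMod 3 → Equiv.Perm Vertex) (N : ZMod 3 → ℕ) (K : ZMod 3 → ZMod 3), g = node s k ∧
      (∀ x, Syll (N x) (K x) (s x)) ∧ ∑ x, N x = n ∧ ∑ x, K x = 0 := by
  induction hg with
  | one => exact ⟨1, 0, 0, node_one.symm, fun _ => Syll.one, by simp, by simp⟩
  | rot_mul e _ ih =>
    obtain ⟨s, N, K, rfl, hs, hN, hK⟩ := ih
    exact ⟨s, N, K, by rw [rot_eq_node, node_mul]; simp, hs, hN, hK⟩
  | @dir_mul n k _ e _ ih =>
    obtain ⟨s, N, K, rfl, hs, hN, hK⟩ := ih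
    refine ⟨fun x => dirSection e (x + k) * s x, fun x => (if x = -k then 1 else 0) + N x,
      fun x => e * (x + k) + K x, by rw [dir_eq_node, node_mul, zero_add], fun x => ?_, ?_, ?_⟩
    · by_cases hx : x = -k
      · simpa [hx, dirSection] using (Syll.dir e).mul (hs (-k))
      · have : x + k ≠ 0 := fun h => hx (eq_neg_of_add_eq_zero_left h)
        simpa [hx, dirSection, this] using (Syll.rot (e * (x + k))).mul (hs x)
    · rw [Finset.sum_add_distrib, hN]
      simp [add_comm]
    · rw [Finset.sum_add_distrib, hK, add_zero]
      have : ∀ e k : ZMod 3, ∑ x, e * (x + k) = 0 := by decide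
      exact this e k

lemma sections_shorter {n : ℕ} {k : ZMod 3} {g : Equiv.Perm Vertex} (hg : Syll n k g) :
    g = GuptaSidki.rot k ∨
    (1 ≤ n ∧ ∃ c e, g = GuptaSidki.rot (k + c) * GuptaSidki.dir e * GuptaSidki.rot (-c)) ∨
    ∃ s, g = node s k ∧ ∀ x, ∃ m < n, ∃ l, Syll m l (s x) := by
  induction hg with
  | one => exact Or.inl rot_zero.symm
  | @rot_mul n k _ e _ ih =>
    rcases ih with rfl | ⟨hn, c, e', rfl⟩ | ⟨s, rfl, hs⟩
    · exact Or.inl (GuptaSidki.rot_mul e k)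
    · exact Or.inr (Or.inl ⟨hn, c, e', by simp only [← mul_assoc, GuptaSidki.rot_mul, add_assoc]⟩)
    · exact Or.inr (Or.inr ⟨s, by rw [rot_eq_node, node_mul]; simp, hs⟩)
  | @dir_mul n k _ e hg ih =>
    rcases ih with rfl | ⟨hn, c, e', rfl⟩ | ⟨s, rfl, hs⟩
    · exact Or.inr (Or.inl ⟨by omega, -k, e, by simp [rot_zero]⟩)
    · by_cases hkc : k + c = 0
      · exact Or.inr (Or.inl ⟨by omega, c, e + e', by
          simp [hkc, rot_zero, ← GuptaSidki.dir_mul, mul_assoc]⟩)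
      · refine Or.inr (Or.inr ⟨fun x => dirSection e (x + k) * dirSection e' (x + -c), ?_,
          fun x => ⟨1, by omega, ?_⟩⟩)
        · simp only [dir_eq_node, rot_eq_node, node_mul]
          simp
        · by_cases hx : x + k = 0
          · have hxc : x + -c ≠ 0 := fun h => hkc (by linear_combination hx - h)
            simp only [dirSection, hx, hxc, if_true, if_false]
            exact ⟨_, (Syll.dir e).mul (Syll.rot (e' * (x + -c)))⟩
          · by_cases hxc : x + -c = 0
            · simp only [dirSection, hx, hxc, if_true, if_false]
              exact ⟨_, (Syll.rot (e * (x + k))).mul (Syll.dir e')⟩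
            · simp only [dirSection, hx, hxc, if_false, GuptaSidki.rot_mul]
              exact ⟨_, by simpa [GuptaSidki.dir_zero] using
                (Syll.rot (e * (x + k) + e' * (x + -c))).dir_mul 0⟩
    · refine Or.inr (Or.inr ⟨fun x => dirSection e (x + k) * s x,
        by rw [dir_eq_node, node_mul, zero_add], fun x => ?_⟩)
      obtain ⟨m, hm, l, hl⟩ := hs x
      refine ⟨m + 1, by omega, ?_⟩
      by_cases hx : x + k = 0
      · exact ⟨l, by simpa [dirSection, hx] using hl.dir_mul e⟩
      · exact ⟨_, by simpa [dirSection, hx, GuptaSidki.dir_zero] using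
          (hl.rot_mul (e * (x + k))).dir_mul 0⟩

end Syll

lemma node_pow_eq_one {s : ZMod 3 → Equiv.Perm Vertex} (hs : ∀ x, ∃ m, s x ^ 3 ^ m = 1) :
    ∃ m, node s 0 ^ 3 ^ m = 1 := by
  choose M hM using hs
  refine ⟨∑ x, M x, ?_⟩
  rw [node_pow, ← node_one]
  congr 1
  funext x
  obtain ⟨d, hd⟩ := pow_dvd_pow 3 (Finset.single_le_sum (f := M) (fun _ _ => Nat.zero_le _)
    (Finset.mem_univ x))
  rw [Pi.pow_apply, hd, pow_mul, hM, one_pow, Pi.one_apply]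

/-- Products of rotations and directed automorphisms have order a power of three: passing to
sections shortens every such product after at most one cubing. -/
theorem Syll.pow_eq_one {n : ℕ} {k : ZMod 3} {g : Equiv.Perm Vertex} (hg : Syll n k g) :
    ∃ m, g ^ 3 ^ m = 1 := by
  induction n using Nat.strong_induction_on generalizing k g with
  | _ n ih =>
    have rotation_free : ∀ h, Syll n 0 h → ∃ m, h ^ 3 ^ m = 1 := by
      intro h hh
      rcases hh.sections_shorter with rfl | ⟨_, c, e, rfl⟩ | ⟨s, rfl, hs⟩
      · exact ⟨0, by simp [rot_zero]⟩
      · refine ⟨1, ?_⟩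
        have hc : GuptaSidki.rot (-c) = (GuptaSidki.rot c)⁻¹ :=
          eq_inv_of_mul_eq_one_left (by rw [GuptaSidki.rot_mul, neg_add_cancel, rot_zero])
        rw [zero_add, hc, pow_one, conj_pow, dir_pow_three, mul_one, mul_inv_cancel]
      · refine node_pow_eq_one fun x => ?_
        obtain ⟨m, hm, l, hl⟩ := hs x
        exact ih m hm hl
    by_cases hk : k = 0
    · exact rotation_free g (hk ▸ hg)
    obtain ⟨s, N, K, rfl, hs, hN, hK⟩ := hg.sections
    have orbit_sum : ∀ {M : Type} [AddCommMonoid M] (f : ZMod 3 → M) (x : ZMod 3),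
        f (x + (k + k)) + (f (x + k) + f x) = ∑ y, f y := by
      intro M _ f x
      have h3 : ∀ k x : ZMod 3, k ≠ 0 →
          (x + (k + k) = 0 ∧ x + k = 1 ∧ x = 2) ∨ (x + (k + k) = 0 ∧ x + k = 2 ∧ x = 1) ∨
          (x + (k + k) = 1 ∧ x + k = 0 ∧ x = 2) ∨ (x + (k + k) = 1 ∧ x + k = 2 ∧ x = 0) ∨
          (x + (k + k) = 2 ∧ x + k = 0 ∧ x = 1) ∨ (x + (k + k) = 2 ∧ x + k = 1 ∧ x = 0) := by
        decide
      have hsum : ∑ y, f y = f 0 + f 1 + f 2 := Fin.sum_univ_three f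
      rw [hsum]
      rcases h3 k x hk with ⟨h1, h2, h3⟩ | ⟨h1, h2, h3⟩ | ⟨h1, h2, h3⟩ | ⟨h1, h2, h3⟩ |
        ⟨h1, h2, h3⟩ | ⟨h1, h2, h3⟩ <;> rw [h1, h2, h3] <;> abel
    obtain ⟨m, hm⟩ : ∃ m, (node s k ^ 3) ^ 3 ^ m = 1 := by
      rw [node_cube]
      refine node_pow_eq_one fun x => rotation_free _ ?_
      have := (hs (x + (k + k))).mul ((hs (x + k)).mul (hs x))
      rwa [orbit_sum N x, orbit_sum K x, hN, hK] at this
    exact ⟨m + 1, by rw [pow_succ', pow_mul, hm]⟩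

end GuptaSidki

/-- The Gupta–Sidki group, generated by the rotation and the directed automorphism. -/
def GuptaSidki : Subgroup (Equiv.Perm GuptaSidki.Vertex) :=
  Subgroup.closure {GuptaSidki.rot 1, GuptaSidki.dir 1}

namespace GuptaSidki

lemma rot_mem : rot 1 ∈ GuptaSidki := Subgroup.subset_closure (by simp)

lemma dir_mem : dir 1 ∈ GuptaSidki := Subgroup.subset_closure (by simp)

lemma exists_syll {g : Equiv.Perm Vertex} (hg : g ∈ GuptaSidki) : ∃ n k, Syll n k g := by
  induction hg using Subgroup.closure_induction_left with
  | one => exact ⟨0, 0, Syll.one⟩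
  | mul_left x hx y _ ih =>
    obtain ⟨n, k, h⟩ := ih
    rcases hx with rfl | rfl
    exacts [⟨_, _, h.rot_mul 1⟩, ⟨_, _, h.dir_mul 1⟩]
  | inv_mul_cancel x hx y _ ih =>
    obtain ⟨n, k, h⟩ := ih
    rcases hx with rfl | rfl
    exacts [⟨_, _, h.rot_mul (-1)⟩, ⟨_, _, h.dir_mul (-1)⟩]

lemma exists_pow_eq_one (g : GuptaSidki) : ∃ m, g ^ 3 ^ m = 1 := by
  obtain ⟨n, k, h⟩ := exists_syll g.2
  obtain ⟨m, hm⟩ := h.pow_eq_one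
  exact ⟨m, Subtype.ext (by simpa using hm)⟩

/-- Every element is the section of an element fixing the first level. -/
lemma exists_section (g : GuptaSidki) : ∃ s, node s 0 ∈ GuptaSidki ∧ s 0 = g := by
  obtain ⟨g, hg⟩ := g
  induction hg using Subgroup.closure_induction with
  | one => exact ⟨1, by rw [node_one]; exact one_mem _, rfl⟩
  | mem x hx =>
    rcases hx with rfl | rfl
    · refine ⟨fun x => dirSection 1 (x + 1), ?_, by simp [dirSection]⟩
      have : node (fun x => dirSection 1 (x + 1)) 0 = (rot 1)⁻¹ * dir 1 * rot 1 := by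
        rw [mul_assoc, eq_inv_mul_iff_mul_eq, dir_eq_node, rot_eq_node, node_mul, node_mul]
        simp
      rw [this]
      exact mul_mem (mul_mem (inv_mem rot_mem) dir_mem) rot_mem
    · exact ⟨dirSection 1, by rw [← dir_eq_node]; exact dir_mem, by simp [dirSection]⟩
  | mul x y _ _ hx hy =>
    obtain ⟨s, hs, hsx⟩ := hx
    obtain ⟨s', hs', hsy⟩ := hy
    refine ⟨fun x => s (x + 0) * s' x, ?_, by simp [hsx, hsy]⟩
    have := mul_mem hs hs'
    rwa [node_mul, add_zero] at this
  | inv x _ hx =>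
    obtain ⟨s, hs, hsx⟩ := hx
    refine ⟨s⁻¹, ?_, by simp [hsx]⟩
    have : node s⁻¹ 0 = (node s 0)⁻¹ := by
      rw [eq_inv_iff_mul_eq_one, node_mul, ← node_one, add_zero]
      congr 1
      funext x
      simp
    rw [this]
    exact inv_mem hs

instance : Infinite GuptaSidki := by
  by_contra hfin
  rw [not_infinite_iff_finite] at hfin
  choose s hs hs0 using exists_section
  let F : GuptaSidki → GuptaSidki := fun g => ⟨node (s g) 0, hs g⟩
  have hF : Function.Injective F := fun g h hgh => by
    have := (node_inj (congrArg Subtype.val hgh)).1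
    exact Subtype.ext (by rw [← hs0, ← hs0, this])
  obtain ⟨g, hg⟩ := Finite.surjective_of_injective hF ⟨rot 1, rot_mem⟩
  have h1 : node (s g) 0 = node 1 1 := (congrArg Subtype.val hg).trans (rot_eq_node 1)
  exact absurd (node_inj h1).2 (by decide)

/-- The two standard generators of the Gupta–Sidki group. -/
def gen : Bool → GuptaSidki
  | true => ⟨rot 1, rot_mem⟩
  | false => ⟨dir 1, dir_mem⟩

lemma gen_pow_three (c : Bool) : gen c ^ 3 = 1 := by
  cases c
  exacts [Subtype.ext (dir_pow_three 1), Subtype.ext (rot_pow_three 1)]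

lemma closure_range_gen : Subgroup.closure (Set.range gen) = ⊤ := by
  have : Set.range gen = ((↑) : GuptaSidki → _) ⁻¹' {rot 1, dir 1} := by
    ext g
    simp [gen, Subtype.ext_iff, or_comm]
  rw [this]
  exact Subgroup.closure_closure_coe_preimage

lemma isMulTorsion : IsMulTorsion GuptaSidki := fun g => by
  obtain ⟨m, hm⟩ := exists_pow_eq_one g
  exact isOfFinOrder_iff_pow_eq_one.2 ⟨_, by positivity, hm⟩

end GuptaSidki

section Torsion

lemma exists_pow_eq_one_of_finite {S : Type*} [Group S] (hS : IsMulTorsion S) {A : Set S}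
    (hA : A.Finite) : ∃ M, 0 < M ∧ ∀ s ∈ A, s ^ M = 1 := by
  refine ⟨∏ s ∈ hA.toFinset, orderOf s, Finset.prod_pos fun s _ => (hS s).orderOf_pos,
    fun s hs => ?_⟩
  exact orderOf_dvd_iff_pow_eq_one.1 (Finset.dvd_prod_of_mem _ (hA.mem_toFinset.2 hs))

/-- A function into a torsion group whose range becomes finite after raising it to a positive power
has finite order. -/
lemma isOfFinOrder_of_finite_range_pow {X S : Type*} [Group S] (hS : IsMulTorsion S) {u : X → S}
    {m : ℕ} (hm : 0 < m) (hu : (Set.range (u ^ m)).Finite) : IsOfFinOrder u := by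
  obtain ⟨M, hM, h⟩ := exists_pow_eq_one_of_finite hS hu
  refine isOfFinOrder_iff_pow_eq_one.2 ⟨m * M, by positivity, funext fun x => ?_⟩
  rw [pow_mul]
  exact h _ ⟨x, rfl⟩

end Torsion

namespace RegularWreathProduct

variable {S Γ : Type*} [Group S] [Group Γ]

/-- The inclusion of the base group. -/
def base : (Γ → S) →* S ≀ᵣ Γ where
  toFun u := ⟨u, 1⟩
  map_one' := rfl
  map_mul' u v := by ext <;> simp

@[simp] lemma left_base (u : Γ → S) : (base u).left = u := rfl

@[simp] lemma right_base (u : Γ → S) : (base u).right = 1 := rfl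

lemma base_injective : Function.Injective (base : (Γ → S) →* S ≀ᵣ Γ) :=
  fun _ _ h => congrArg left h

lemma conj_base (γ : Γ) (u : Γ → S) :
    inl γ * base u * (inl γ)⁻¹ = base fun g => u (γ⁻¹ * g) := by
  ext <;> simp

/-- Subgroup of the wreath product cut out by a translation-invariant subgroup of the base. -/
def ofInvariant (N : Subgroup (Γ → S)) (hN : ∀ u ∈ N, ∀ γ : Γ, (fun g => u (γ * g)) ∈ N) :
    Subgroup (S ≀ᵣ Γ) where
  carrier := {q | q.left ∈ N}
  one_mem' := N.one_mem
  mul_mem' hp hq := N.mul_mem hp (hN _ hq _)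
  inv_mem' hp := hN _ (N.inv_mem hp) _

lemma isOfFinOrder_of_mem_ofInvariant (hΓ : IsMulTorsion Γ) {N : Subgroup (Γ → S)}
    {hN : ∀ u ∈ N, ∀ γ : Γ, (fun g => u (γ * g)) ∈ N} (hfin : ∀ u ∈ N, IsOfFinOrder u)
    {q : S ≀ᵣ Γ} (hq : q ∈ ofInvariant N hN) : IsOfFinOrder q := by
  obtain ⟨n, hn, hqn⟩ := isOfFinOrder_iff_pow_eq_one.1 (hΓ q.right)
  have hright : (q ^ n).right = 1 := by
    rw [← hqn]
    exact map_pow rightHom q n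
  have hbase : q ^ n = base (q ^ n).left := by
    ext1
    · rfl
    · exact hright
  have : IsOfFinOrder (q ^ n) := by
    rw [hbase]
    exact base.isOfFinOrder (hfin _ (pow_mem hq n))
  exact (isOfFinOrder_pow.1 this).resolve_right hn.ne'

end RegularWreathProduct

open RegularWreathProduct
open scoped commutatorElement

section SparseWreath

/-- A family in a group is Sidon if the quotients of its distinct members determine them. -/
def IsSidon {I Γ : Type*} [Group Γ] (x : I → Γ) : Prop :=
  ∀ i j k l, i ≠ j → x i * (x j)⁻¹ = x k * (x l)⁻¹ → i = k ∧ j = l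

variable {I Γ S : Type*} [Group Γ] [Group S] {x : I → Γ} {t : I → S}

lemma IsSidon.injective (hx : IsSidon x) : Function.Injective x := by
  intro i j hij
  by_contra hne
  exact hne (hx i j j i hne (by rw [hij])).1

/-- The function taking the value `t i` at `x i` and trivial elsewhere. -/
noncomputable def sparse (x : I → Γ) (t : I → S) : Γ → S := Function.extend x t fun _ => 1

lemma sparse_apply (hx : IsSidon x) (i : I) : sparse x t (x i) = t i :=
  hx.injective.extend_apply t _ i

lemma exists_of_sparse_ne_one {X : Type*} {x : I → X} {g : X} (h : sparse x t g ≠ 1) :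
    ∃ i, x i = g := by
  by_contra hg
  exact h (Function.extend_apply' t _ g hg)

lemma sparse_pow {X : Type*} {x : I → X} {m : ℕ} (ht : ∀ i, t i ^ m = 1) (g : X) :
    sparse x t g ^ m = 1 := by
  by_cases h : ∃ i, x i = g
  · classical
    rw [sparse, Function.extend_def, dif_pos h]
    exact ht _
  · rw [sparse, Function.extend_apply' t _ g h]
    exact one_pow m

/-- The subgroup of the base generated by the translates of `sparse x t`. -/
def translates (x : I → Γ) (t : I → S) : Subgroup (Γ → S) :=
  Subgroup.closure (Set.range fun (γ : Γ) (g : Γ) => sparse x t (γ * g))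

lemma translates_invariant (u : Γ → S) (hu : u ∈ translates x t) (γ : Γ) :
    (fun g => u (γ * g)) ∈ translates x t := by
  induction hu using Subgroup.closure_induction with
  | mem u hu =>
    obtain ⟨δ, rfl⟩ := hu
    exact Subgroup.subset_closure ⟨δ * γ, by simp [mul_assoc]⟩
  | one => exact one_mem (translates x t)
  | mul u v _ _ hu hv => exact mul_mem hu hv
  | inv u _ hu => exact inv_mem hu

lemma exists_finite_of_mem_translates {u : Γ → S} (hu : u ∈ translates x t) :
    ∃ D : Set Γ, D.Finite ∧
      ∀ g, u g ∈ Subgroup.closure ((fun δ => sparse x t (δ * g)) '' D) := by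
  induction hu using Subgroup.closure_induction with
  | mem u hu =>
    obtain ⟨δ, rfl⟩ := hu
    exact ⟨{δ}, Set.finite_singleton δ, fun g => Subgroup.subset_closure (by simp)⟩
  | one => exact ⟨∅, Set.finite_empty, fun g => one_mem _⟩
  | mul u v _ _ hu hv =>
    obtain ⟨D, hD, hu⟩ := hu
    obtain ⟨E, hE, hv⟩ := hv
    refine ⟨D ∪ E, hD.union hE, fun g => mul_mem ?_ ?_⟩
    · exact Subgroup.closure_mono (Set.image_mono Set.subset_union_left) (hu g)
    · exact Subgroup.closure_mono (Set.image_mono Set.subset_union_right) (hv g)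
  | inv u _ hu =>
    obtain ⟨D, hD, hu⟩ := hu
    exact ⟨D, hD, fun g => inv_mem (hu g)⟩

lemma isOfFinOrder_of_mem_translates (hS : IsMulTorsion S) (hx : IsSidon x) {m : ℕ} (hm : 0 < m)
    (ht : ∀ i, t i ^ m = 1) {u : Γ → S} (hu : u ∈ translates x t) : IsOfFinOrder u := by
  obtain ⟨D, hD, hu⟩ := exists_finite_of_mem_translates hu
  let crossing : Set Γ :=
    ⋃ δ ∈ D, ⋃ ε ∈ D, {g | ∃ i j, i ≠ j ∧ δ * g = x i ∧ ε * g = x j}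
  have crossing_finite : crossing.Finite := by
    refine hD.biUnion fun δ _ => hD.biUnion fun ε _ => Set.Subsingleton.finite ?_
    rintro g ⟨i, j, hij, hi, hj⟩ g' ⟨i', j', -, hi', hj'⟩
    have : i = i' := (hx i j i' j' hij (by rw [← hi, ← hj, ← hi', ← hj']; group)).1
    exact mul_left_cancel (hi.trans (this ▸ hi'.symm))
  have pow_outside : ∀ g ∉ crossing, u g ^ m = 1 := by
    intro g hg
    have cyclic : ∃ s : S, s ^ m = 1 ∧ ∀ δ ∈ D, sparse x t (δ * g) ∈ Subgroup.zpowers s := by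
      by_cases h : ∃ δ ∈ D, sparse x t (δ * g) ≠ 1
      · obtain ⟨δ, hδ, hne⟩ := h
        refine ⟨sparse x t (δ * g), sparse_pow ht (δ * g), fun ε hε => ?_⟩
        by_cases hε1 : sparse x t (ε * g) = 1
        · rw [hε1]; exact one_mem _
        · obtain ⟨i, hi⟩ := exists_of_sparse_ne_one hne
          obtain ⟨j, hj⟩ := exists_of_sparse_ne_one hε1
          have hij : i = j := by
            by_contra hij
            exact hg (Set.mem_biUnion hδ (Set.mem_biUnion hε ⟨i, j, hij, hi.symm, hj.symm⟩))
          rw [← hi, ← hj, hij]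
          exact Subgroup.mem_zpowers _
      · push Not at h
        exact ⟨1, one_pow m, fun δ hδ => by rw [h δ hδ]; exact one_mem _⟩
    obtain ⟨s, hs, hD⟩ := cyclic
    have hle : Subgroup.closure ((fun δ => sparse x t (δ * g)) '' D) ≤ Subgroup.zpowers s := by
      rw [Subgroup.closure_le]
      rintro _ ⟨δ, hδ, rfl⟩
      exact hD δ hδ
    obtain ⟨z, hz⟩ := Subgroup.mem_zpowers_iff.1 (hle (hu g))
    rw [← hz, ← zpow_natCast, ← zpow_mul, mul_comm, zpow_mul, zpow_natCast, hs, one_zpow]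
  refine isOfFinOrder_of_finite_range_pow hS hm
    (((crossing_finite.image (u ^ m)).insert 1).subset ?_)
  rintro _ ⟨g, rfl⟩
  by_cases hg : g ∈ crossing
  · exact Or.inr ⟨g, hg, rfl⟩
  · exact Or.inl (pow_outside g hg)

variable {J : Type*}

/-- The generators of the sparse wreath product: those of `Γ` and a sparse base element. -/
noncomputable def sparseGen (ψ : J → Γ) (x : I → Γ) (t : I → S) : Option J → S ≀ᵣ Γ
  | none => base (sparse x t)
  | some j => inl (ψ j)

/-- The subgroup of the wreath product generated by `Γ` and a sparse base element. -/
def sparseWreath (ψ : J → Γ) (x : I → Γ) (t : I → S) : Subgroup (S ≀ᵣ Γ) :=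
  Subgroup.closure (Set.range (sparseGen ψ x t))

lemma isMulTorsion_sparseWreath (hΓ : IsMulTorsion Γ) (hS : IsMulTorsion S) (hx : IsSidon x)
    {m : ℕ} (hm : 0 < m) (ht : ∀ i, t i ^ m = 1) (ψ : J → Γ) :
    IsMulTorsion (sparseWreath ψ x t) := by
  have hle : sparseWreath ψ x t ≤ ofInvariant (translates x t) translates_invariant := by
    rw [sparseWreath, Subgroup.closure_le]
    rintro _ ⟨_ | j, rfl⟩
    · exact Subgroup.subset_closure ⟨1, by simp [sparseGen]⟩
    · exact one_mem (translates x t)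
  intro q
  rw [← Submonoid.isOfFinOrder_coe]
  exact isOfFinOrder_of_mem_ofInvariant hΓ
    (fun u hu => isOfFinOrder_of_mem_translates hS hx hm ht hu) (hle q.2)

lemma inl_mem_sparseWreath {ψ : J → Γ} (hψ : Subgroup.closure (Set.range ψ) = ⊤) (γ : Γ) :
    inl γ ∈ sparseWreath ψ x t := by
  have : Subgroup.closure (Set.range ψ) ≤ (sparseWreath ψ x t).comap inl := by
    rw [Subgroup.closure_le]
    rintro _ ⟨j, rfl⟩
    exact Subgroup.subset_closure ⟨some j, rfl⟩
  exact this (hψ ▸ Subgroup.mem_top γ)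

lemma base_translate_mem_sparseWreath {ψ : J → Γ} (hψ : Subgroup.closure (Set.range ψ) = ⊤)
    (γ : Γ) : base (fun g => sparse x t (γ * g)) ∈ sparseWreath ψ x t := by
  have hf : base (sparse x t) ∈ sparseWreath ψ x t := Subgroup.subset_closure ⟨none, rfl⟩
  have := mul_mem (mul_mem (inl_mem_sparseWreath (t := t) (x := x) hψ γ⁻¹) hf)
    (inv_mem (inl_mem_sparseWreath hψ γ⁻¹))
  rwa [conj_base, inv_inv] at this

/-- The copy of `S` in the base supported at the identity. -/
noncomputable def baseSingle (S Γ : Type*) [Group S] [Group Γ] [DecidableEq Γ] : S →* S ≀ᵣ Γ :=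
  base.comp (MonoidHom.mulSingle (fun _ : Γ => S) 1)

lemma baseSingle_injective [DecidableEq Γ] : Function.Injective (baseSingle S Γ) :=
  base_injective.comp (Pi.mulSingle_injective (M := fun _ : Γ => S) 1)

lemma base_conj_baseSingle [DecidableEq Γ] (u : Γ → S) (s : S) :
    base u * baseSingle S Γ s * (base u)⁻¹ = baseSingle S Γ (u 1 * s * (u 1)⁻¹) := by
  simp only [baseSingle, MonoidHom.comp_apply, ← map_mul, ← map_inv]
  congr 1
  funext g
  by_cases hg : g = 1
  · subst hg
    simp
  · simp [hg]

lemma commutator_le_of_closure_eq_top {C : Subgroup S}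
    (ht : Subgroup.closure (Set.range t) = ⊤) (hconj : ∀ k s, s ∈ C ↔ t k * s * (t k)⁻¹ ∈ C)
    (hcomm : ∀ i j, ⁅t i, t j⁆ ∈ C) : commutator S ≤ C := by
  have hnorm : C.Normal := by
    rw [← Subgroup.normalizer_eq_top_iff, eq_top_iff, ← ht, Subgroup.closure_le]
    rintro _ ⟨k, rfl⟩
    exact Subgroup.mem_normalizer_iff.2 (hconj k)
  have hgen : ∀ i j, QuotientGroup.mk' C (t i) * QuotientGroup.mk' C (t j) =
      QuotientGroup.mk' C (t j) * QuotientGroup.mk' C (t i) := fun i j => by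
    rw [← commutatorElement_eq_one_iff_mul_comm, ← map_commutatorElement]
    exact (QuotientGroup.eq_one_iff _).2 (hcomm i j)
  have hcent : ∀ (A : Set (S ⧸ C)), (∀ i, QuotientGroup.mk' C (t i) ∈ Subgroup.centralizer A) →
      ∀ s, QuotientGroup.mk' C s ∈ Subgroup.centralizer A := fun A hA s => by
    have : Subgroup.closure (Set.range t) ≤
        (Subgroup.centralizer A).comap (QuotientGroup.mk' C) := by
      rw [Subgroup.closure_le]
      rintro _ ⟨i, rfl⟩
      exact hA i
    exact this (ht ▸ Subgroup.mem_top s)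
  have hleft : ∀ j s, QuotientGroup.mk' C s ∈ Subgroup.centralizer {QuotientGroup.mk' C (t j)} :=
    fun j => hcent _ fun i => Subgroup.mem_centralizer_singleton_iff.2 (hgen i j)
  have hall : ∀ s' s, QuotientGroup.mk' C s ∈ Subgroup.centralizer {QuotientGroup.mk' C s'} :=
    fun s' => hcent _ fun i => Subgroup.mem_centralizer_singleton_iff.2
      (Subgroup.mem_centralizer_singleton_iff.1 (hleft i s')).symm
  rw [commutator_def, Subgroup.commutator_le]
  intro s _ s' _
  rw [← QuotientGroup.eq_one_iff]
  change QuotientGroup.mk' C ⁅s, s'⁆ = 1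
  rw [map_commutatorElement, commutatorElement_eq_one_iff_mul_comm]
  exact Subgroup.mem_centralizer_singleton_iff.1 (hall s' s)

lemma commutator_le_comap_sparseWreath [DecidableEq Γ] (hx : IsSidon x) {ψ : J → Γ}
    (hψ : Subgroup.closure (Set.range ψ) = ⊤) (ht : Subgroup.closure (Set.range t) = ⊤) :
    commutator S ≤ (sparseWreath ψ x t).comap (baseSingle S Γ) := by
  refine commutator_le_of_closure_eq_top ht (fun k s => ?_) fun i j => ?_
  · have hk := base_translate_mem_sparseWreath (x := x) (t := t) hψ (x k)
    have := base_conj_baseSingle (fun g => sparse x t (x k * g)) s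
    simp only [mul_one, sparse_apply hx] at this
    rw [Subgroup.mem_comap, Subgroup.mem_comap, ← this, mul_mem_cancel_right (inv_mem hk),
      mul_mem_cancel_left hk]
  · have hi := base_translate_mem_sparseWreath (x := x) (t := t) hψ (x i)
    have hj := base_translate_mem_sparseWreath (x := x) (t := t) hψ (x j)
    have := Subgroup.mul_mem _ (mul_mem (mul_mem hi hj) (inv_mem hi)) (inv_mem hj)
    rw [← commutatorElement_def, ← map_commutatorElement] at this
    rw [Subgroup.mem_comap]
    convert this using 1
    simp only [baseSingle, MonoidHom.comp_apply]
    congr 1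
    funext g
    by_cases hg : g = 1
    · subst hg
      simp [commutatorElement_def, sparse_apply hx]
    · have hcomm : ⁅sparse x t (x i * g), sparse x t (x j * g)⁆ = 1 := by
        rw [commutatorElement_eq_one_iff_mul_comm]
        by_cases hi1 : sparse x t (x i * g) = 1
        · simp [hi1]
        by_cases hj1 : sparse x t (x j * g) = 1
        · simp [hj1]
        obtain ⟨k, hk⟩ := exists_of_sparse_ne_one hi1
        obtain ⟨l, hl⟩ := exists_of_sparse_ne_one hj1
        by_cases hij : i = j
        · rw [hij]
        · have : i = k := (hx i j k l hij (by rw [hk, hl]; group)).1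
          rw [← this] at hk
          exact absurd (left_eq_mul.1 hk) hg
      simpa [hg, commutatorElement_def] using hcomm.symm

/-- A group mapping into the commutator subgroup of `S` embeds into the group generated by `Γ` and
a sparse base element. -/
theorem exists_embedding_sparseWreath (hx : IsSidon x) {ψ : J → Γ}
    (hψ : Subgroup.closure (Set.range ψ) = ⊤) (ht : Subgroup.closure (Set.range t) = ⊤)
    {H : Type*} [Group H] (ι : H →* S) (hι : Function.Injective ι)
    (hcomm : ι.range ≤ commutator S) :
    ∃ f : H →* sparseWreath ψ x t, Function.Injective f := by
  classical
  refine ⟨((baseSingle S Γ).comp ι).codRestrict _ fun h =>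
    commutator_le_comap_sparseWreath hx hψ ht (hcomm ⟨h, rfl⟩), fun h h' hh => ?_⟩
  exact hι (baseSingle_injective (congrArg Subtype.val hh))

end SparseWreath

section Walks

variable {Γ J : Type*} [Group Γ] (ψ : J → Γ)

/-- The walk in the Cayley graph of `ψ` starting at the identity with steps `w`. -/
def walk (w : ℕ → J) : ℕ → Γ
  | 0 => 1
  | n + 1 => ψ (w n) * walk w n

/-- The vertices reached by walks of length less than `n`. -/
def walkBall (n : ℕ) : Set Γ := {g | ∃ w, ∃ k < n, walk ψ w k = g}

lemma walk_congr {w w' : ℕ → J} {n : ℕ} (h : ∀ k < n, w k = w' k) : walk ψ w n = walk ψ w' n := by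
  induction n with
  | zero => rfl
  | succ n ih => rw [walk, walk, h n n.lt_succ_self, ih fun k hk => h k (hk.trans n.lt_succ_self)]

lemma exists_walk_step (w : ℕ → J) (n : ℕ) (j : J) :
    ∃ w', walk ψ w' (n + 1) = ψ j * walk ψ w n := by
  refine ⟨Function.update w n j, ?_⟩
  rw [walk, Function.update_self]
  congr 1
  exact walk_congr ψ fun k hk => Function.update_of_ne hk.ne j w

lemma walk_mem_walkBall_succ {w : ℕ → J} {n : ℕ} (h : walk ψ w n ∈ walkBall ψ n) :
    walk ψ w (n + 1) ∈ walkBall ψ (n + 1) := by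
  obtain ⟨w', k, hk, hw'⟩ := h
  obtain ⟨w'', h''⟩ := exists_walk_step ψ w' k (w n)
  exact ⟨w'', k + 1, by omega, by rw [h'', hw', walk]⟩

lemma walkBall_finite [Finite J] (n : ℕ) : (walkBall ψ n).Finite := by
  induction n with
  | zero => exact Set.finite_empty.subset fun g ⟨_, _, hk, _⟩ => absurd hk (Nat.not_lt_zero _)
  | succ n ih =>
    refine ((Set.finite_range ψ).image2 (· * ·) ih |>.insert 1).subset ?_
    rintro _ ⟨w, k, hk, rfl⟩
    cases k with
    | zero => exact Or.inl rfl
    | succ k => exact Or.inr ⟨_, ⟨w k, rfl⟩, _, ⟨w, k, by omega, rfl⟩, rfl⟩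

lemma exists_walk_eq [Nonempty J] (hψ : Subgroup.closure (Set.range ψ) = ⊤)
    (hfin : ∀ j, IsOfFinOrder (ψ j)) (g : Γ) : ∃ w n, walk ψ w n = g := by
  have hg : g ∈ Submonoid.closure (Set.range ψ) := by
    rw [← Subgroup.closure_toSubmonoid_of_isOfFinOrder (by rintro _ ⟨j, rfl⟩; exact hfin j), hψ]
    exact Subgroup.mem_top g
  induction hg using Submonoid.closure_induction_left with
  | one => exact ⟨fun _ => Classical.arbitrary J, 0, rfl⟩
  | mul_left x hx y _ ih =>
    obtain ⟨j, rfl⟩ := hx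
    obtain ⟨w, n, rfl⟩ := ih
    obtain ⟨w', h⟩ := exists_walk_step ψ w n j
    exact ⟨w', n + 1, h⟩

/-- An infinite group generated by finitely many elements of finite order contains an infinite
self-avoiding walk from the identity. -/
theorem exists_injective_walk [Infinite Γ] [Finite J] [Nonempty J]
    (hψ : Subgroup.closure (Set.range ψ) = ⊤) (hfin : ∀ j, IsOfFinOrder (ψ j)) :
    ∃ w, Function.Injective (walk ψ w) := by
  let : TopologicalSpace Γ := ⊥
  have : DiscreteTopology Γ := ⟨rfl⟩
  let : TopologicalSpace J := ⊥
  have : DiscreteTopology J := ⟨rfl⟩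
  have hcont : ∀ n, Continuous fun w => walk ψ w n := fun n => by
    induction n with
    | zero => exact continuous_const
    | succ n ih =>
      exact (continuous_of_discreteTopology (f := fun p : J × Γ => ψ p.1 * p.2)).comp
        ((continuous_apply n).prodMk ih)
  let geodesic : ℕ → Set (ℕ → J) := fun n => {w | walk ψ w n ∉ walkBall ψ n}
  have hclosed : ∀ n, IsClosed (geodesic n) := fun n =>
    (isClosed_discrete (walkBall ψ n)ᶜ).preimage (hcont n)
  have hanti : ∀ n, geodesic (n + 1) ⊆ geodesic n := fun n w hw h =>
    hw (walk_mem_walkBall_succ ψ h)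
  have hne : ∀ n, (geodesic n).Nonempty := by
    intro n
    by_contra hempty
    rw [Set.not_nonempty_iff_eq_empty] at hempty
    have hwalk : ∀ m w, walk ψ w m ∈ walkBall ψ n := by
      intro m
      induction m using Nat.strong_induction_on with
      | _ m ih =>
        intro w
        by_cases hmn : m < n
        · exact ⟨w, m, hmn, rfl⟩
        · have : w ∉ geodesic m := fun h => by
            have := antitone_nat_of_succ_le hanti (not_lt.1 hmn) h
            rwa [hempty] at this
          obtain ⟨w', k, hk, h⟩ := not_not.1 this
          exact h ▸ ih k hk w'
    refine Set.infinite_univ.not_finite ((walkBall_finite ψ n).subset fun g _ => ?_)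
    obtain ⟨w, m, rfl⟩ := exists_walk_eq ψ hψ hfin g
    exact hwalk m w
  obtain ⟨w, hw⟩ := IsCompact.nonempty_iInter_of_sequence_nonempty_isCompact_isClosed geodesic hanti
    hne (hclosed 0).isCompact hclosed
  rw [Set.mem_iInter] at hw
  refine ⟨w, fun m n hmn => ?_⟩
  by_contra hne
  rcases Nat.lt_or_gt_of_ne hne with h | h
  · exact hw n ⟨w, m, h, hmn⟩
  · exact hw m ⟨w, n, h, hmn.symm⟩

end Walks

section SidonSequence

variable {Γ : Type*} [Group Γ]

lemma sq_injective_of_odd_pow (hodd : ∀ g : Γ, ∃ n, Odd n ∧ g ^ n = 1) {g h : Γ}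
    (hgh : g ^ 2 = h ^ 2) : g = h := by
  obtain ⟨m, hm, hgm⟩ := hodd g
  obtain ⟨n, hn, hhn⟩ := hodd h
  obtain ⟨d, hd⟩ := hm.mul hn
  calc g = g ^ (m * n + 1) := by rw [pow_succ, pow_mul, hgm, one_pow, one_mul]
    _ = (g ^ 2) ^ (d + 1) := by rw [hd, ← pow_mul]; ring_nf
    _ = (h ^ 2) ^ (d + 1) := by rw [hgh]
    _ = h ^ (m * n + 1) := by rw [hd, ← pow_mul]; ring_nf
    _ = h := by rw [pow_succ, mul_comm, pow_mul, hhn, one_pow, one_mul]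

lemma exists_sidon_extension [Infinite Γ] (hodd : ∀ g : Γ, ∃ n, Odd n ∧ g ^ n = 1)
    (A : Finset Γ) :
    ∃ y, (∀ u ∈ A, ∀ v ∈ A, ∀ w ∈ A, y ≠ u * v⁻¹ * w) ∧
      ∀ u ∈ A, ∀ v ∈ A, y * u⁻¹ ≠ v * y⁻¹ := by
  have hlin : (⋃ u ∈ (A : Set Γ), ⋃ v ∈ (A : Set Γ), ⋃ w ∈ (A : Set Γ),
      ({u * v⁻¹ * w} : Set Γ)).Finite :=
    A.finite_toSet.biUnion fun u _ => A.finite_toSet.biUnion fun v _ =>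
      A.finite_toSet.biUnion fun w _ => Set.finite_singleton _
  have hquad : (⋃ u ∈ (A : Set Γ), ⋃ v ∈ (A : Set Γ), {y | y * u⁻¹ = v * y⁻¹}).Finite := by
    refine A.finite_toSet.biUnion fun u _ => A.finite_toSet.biUnion fun v _ =>
      Set.Subsingleton.finite ?_
    have hsq : ∀ y, y * u⁻¹ = v * y⁻¹ → (y * u⁻¹) ^ 2 = v * u⁻¹ := fun y hy => by
      rw [pow_two]
      nth_rewrite 1 [hy]
      group
    intro y hy z hz
    exact mul_right_cancel (sq_injective_of_odd_pow hodd ((hsq y hy).trans (hsq z hz).symm))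
  obtain ⟨y, hy⟩ := (hlin.union hquad).infinite_compl.nonempty
  simp only [Set.mem_compl_iff, Set.mem_union, not_or, Set.mem_iUnion, not_exists,
    Set.mem_singleton_iff, Set.mem_ofPred_eq, Finset.mem_coe] at hy
  exact ⟨y, fun u hu v hv w hw => hy.1 u hu v hv w hw, fun u hu v hv => hy.2 u hu v hv⟩

/-- An infinite group all of whose elements have odd order contains an infinite Sidon sequence. -/
theorem exists_isSidon [Infinite Γ] (hodd : ∀ g : Γ, ∃ n, Odd n ∧ g ^ n = 1) :
    ∃ x : ℕ → Γ, IsSidon x := by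
  classical
  choose y hlin hquad using exists_sidon_extension hodd
  let A : ℕ → Finset Γ := fun n => Nat.rec ∅ (fun _ B => insert (y B) B) n
  let x : ℕ → Γ := fun n => y (A n)
  have hA : ∀ n, A (n + 1) = insert (x n) (A n) := fun n => rfl
  have hmono : Monotone A := monotone_nat_of_le_succ fun n => by
    rw [hA]
    exact Finset.subset_insert _ _
  have hmem : ∀ m n, m < n → x m ∈ A n := fun m n hmn =>
    hmono (Nat.succ_le_of_lt hmn) (by rw [hA]; exact Finset.mem_insert_self _ _)
  have hlin' : ∀ n i j k, i < n → j < n → k < n → x n ≠ x i * (x j)⁻¹ * x k :=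
    fun n i j k hi hj hk => hlin _ _ (hmem i n hi) _ (hmem j n hj) _ (hmem k n hk)
  have hquad' : ∀ n i j, i < n → j < n → x n * (x i)⁻¹ ≠ x j * (x n)⁻¹ :=
    fun n i j hi hj => hquad _ _ (hmem i n hi) _ (hmem j n hj)
  have hinj : Function.Injective x := by
    intro m n hmn
    by_contra hne
    rcases Nat.lt_or_gt_of_ne hne with h | h
    · exact hlin' n m m m h h h (by rw [← hmn]; group)
    · exact hlin' m n n n h h h (by rw [hmn]; group)
  refine ⟨x, fun i j k l hij h => ?_⟩
  have hkl : k ≠ l := by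
    rintro rfl
    rw [mul_inv_cancel, mul_inv_eq_one] at h
    exact hij (hinj h)
  have hik : i = k → j = l := by
    rintro rfl
    exact hinj (inv_injective (mul_left_cancel h))
  have hjl : j = l → i = k := by
    rintro rfl
    exact hinj (mul_right_cancel h)
  by_cases hik' : i = k
  · exact ⟨hik', hik hik'⟩
  have hjl' : j ≠ l := fun h => hik' (hjl h)
  exfalso
  have hi : x i = x k * (x l)⁻¹ * x j := by rw [← h]; group
  have hj : x j = x l * (x k)⁻¹ * x i := by rw [hi]; group
  have hk : x k = x i * (x j)⁻¹ * x l := by rw [h]; group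
  have hl : x l = x j * (x i)⁻¹ * x k := by rw [hk]; group
  by_cases hil : i = l
  · by_cases hjk : j = k
    · subst hil hjk
      rcases Nat.lt_or_gt_of_ne hij with hlt | hlt
      · exact hquad' j i i hlt hlt h.symm
      · exact hquad' i j j hlt hlt h
    · subst hil
      rcases lt_trichotomy i j with h1 | h1 | h1
      · rcases Nat.lt_or_gt_of_ne hjk with h2 | h2
        · exact hlin' k i j i (by omega) h2 (by omega) hk
        · exact hlin' j i k i h1 h2 h1 hj
      · exact hij h1
      · rcases Nat.lt_or_gt_of_ne hkl with h2 | h2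
        · exact hquad' i j k h1 h2 h
        · exact hlin' k i j i h2 (by omega) h2 hk
  · by_cases hjk : j = k
    · subst hjk
      rcases lt_trichotomy i j with h1 | h1 | h1
      · rcases Nat.lt_or_gt_of_ne hkl with h2 | h2
        · exact hlin' l j i j h2 (by omega) h2 hl
        · exact hquad' j l i h2 h1 h.symm
      · exact hij h1
      · rcases Nat.lt_or_gt_of_ne hil with h2 | h2
        · exact hlin' l j i j (by omega) h2 (by omega) hl
        · exact hlin' i j l j h1 h2 h1 hi
    · have hmax : (j < i ∧ k < i ∧ l < i) ∨ (i < j ∧ k < j ∧ l < j) ∨ (i < k ∧ j < k ∧ l < k) ∨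
          (i < l ∧ j < l ∧ k < l) := by omega
      rcases hmax with ⟨h1, h2, h3⟩ | ⟨h1, h2, h3⟩ | ⟨h1, h2, h3⟩ | ⟨h1, h2, h3⟩
      · exact hlin' i k l j h2 h3 h1 hi
      · exact hlin' j l k i h3 h2 h1 hj
      · exact hlin' k i j l h1 h2 h3 hk
      · exact hlin' l j i k h2 h1 h3 hl

end SidonSequence

section Swindle

variable {T Γ : Type*} [Group T] [Group Γ]

lemma commutator_base_inl (u : Γ → T) (γ : Γ) :
    ⁅base u, inl γ⁆ = base (u * fun g => (u (γ⁻¹ * g))⁻¹) := by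
  have : ⁅base u, inl γ⁆ = base u * (inl γ * base u⁻¹ * (inl γ)⁻¹) := by
    rw [commutatorElement_def, map_inv]
    group
  rw [this, conj_base, ← map_mul]
  rfl

open Classical in
/-- The homomorphism sending `t` to the function equal to `t` on `F` and trivial elsewhere. -/
noncomputable def indicatorHom (T : Type*) [Group T] (F : Set Γ) : T →* (Γ → T) where
  toFun t g := if g ∈ F then t else 1
  map_one' := by ext; simp
  map_mul' s t := by ext g; by_cases h : g ∈ F <;> simp [h]

lemma indicatorHom_of_mem {X : Type*} {F : Set X} {g : X} (h : g ∈ F) (t : T) :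
    indicatorHom T F t g = t :=
  if_pos h

lemma indicatorHom_of_notMem {X : Type*} {F : Set X} {g : X} (h : g ∉ F) (t : T) :
    indicatorHom T F t g = 1 :=
  if_neg h

/-- The vertices at which the walk `w` takes a step of type `c`. -/
def stepSet {J : Type*} (ψ : J → Γ) (w : ℕ → J) (c : J) : Set Γ :=
  {g | ∃ k, walk ψ w k = g ∧ w k = c}

/-- Along an infinite self-avoiding walk, the copy of `T` at the identity is a product of
commutators: the contributions of consecutive steps cancel. -/
theorem baseSingle_eq_mul_commutator [DecidableEq Γ] {ψ : Bool → Γ} {w : ℕ → Bool}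
    (hw : Function.Injective (walk ψ w)) (t : T) :
    baseSingle T Γ t =
      ⁅base (indicatorHom T (stepSet ψ w true) t), inl (ψ true)⁆ *
        ⁅base (indicatorHom T (stepSet ψ w false) t), inl (ψ false)⁆ := by
  have hstep : ∀ n c, walk ψ w n ∈ stepSet ψ w c ↔ w n = c := fun n c =>
    ⟨fun ⟨k, hk, hc⟩ => hw hk ▸ hc, fun h => ⟨n, rfl, h⟩⟩
  have hback : ∀ g c, (ψ c)⁻¹ * g ∈ stepSet ψ w c ↔ ∃ k, walk ψ w (k + 1) = g ∧ w k = c := by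
    refine fun g c => exists_congr fun k => and_congr_left fun hk => ?_
    rw [eq_inv_mul_iff_mul_eq, walk, hk]
  have hback_zero : ∀ c, (ψ c)⁻¹ * walk ψ w 0 ∉ stepSet ψ w c := fun c h => by
    obtain ⟨k, hk, -⟩ := (hback _ c).1 h
    exact absurd (hw hk) k.succ_ne_zero
  have hback_succ : ∀ n c, (ψ c)⁻¹ * walk ψ w (n + 1) ∈ stepSet ψ w c ↔ w n = c := fun n c => by
    rw [hback]
    exact ⟨fun ⟨k, hk, hc⟩ => Nat.succ_injective (hw hk) ▸ hc, fun h => ⟨n, rfl, h⟩⟩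
  rw [commutator_base_inl, commutator_base_inl, ← map_mul]
  refine congrArg base (funext fun g => ?_)
  change (Pi.mulSingle 1 t : Γ → T) g = indicatorHom T _ t g * (indicatorHom T _ t _)⁻¹ *
    (indicatorHom T _ t g * (indicatorHom T _ t _)⁻¹)
  by_cases hg : ∃ n, walk ψ w n = g
  · obtain ⟨_ | n, rfl⟩ := hg
    · rw [indicatorHom_of_notMem (hback_zero true), indicatorHom_of_notMem (hback_zero false),
        show (Pi.mulSingle 1 t : Γ → T) (walk ψ w 0) = t by simp [walk]]
      cases h : w 0 <;> simp [indicatorHom, hstep, h]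
    · have hne : walk ψ w (n + 1) ≠ 1 := fun h => absurd (hw (a₂ := 0) h) n.succ_ne_zero
      rw [Pi.mulSingle_eq_of_ne hne]
      cases h : w n <;> cases h' : w (n + 1) <;>
        simp [indicatorHom, hstep, hback_succ, h, h']
  · have hout : ∀ c, g ∉ stepSet ψ w c := fun c ⟨k, hk, _⟩ => hg ⟨k, hk⟩
    have hout' : ∀ c, (ψ c)⁻¹ * g ∉ stepSet ψ w c := fun c h => by
      obtain ⟨k, hk, -⟩ := (hback g c).1 h
      exact hg ⟨k + 1, hk⟩
    have hne : g ≠ 1 := fun h => hg ⟨0, h.symm⟩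
    simp [indicatorHom, hout, hout', hne]

/-- The functions with finite range. -/
def finiteRange (Γ T : Type*) [Group T] : Subgroup (Γ → T) where
  carrier := {u | (Set.range u).Finite}
  one_mem' := (Set.finite_singleton 1).subset (by rintro _ ⟨g, rfl⟩; rfl)
  mul_mem' hu hv := (hu.image2 (· * ·) hv).subset (by
    rintro _ ⟨g, rfl⟩; exact ⟨_, ⟨g, rfl⟩, _, ⟨g, rfl⟩, rfl⟩)
  inv_mem' hu := (hu.image (·⁻¹)).subset (by rintro _ ⟨g, rfl⟩; exact ⟨_, ⟨g, rfl⟩, rfl⟩)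

lemma finiteRange_invariant (u : Γ → T) (hu : u ∈ finiteRange Γ T) (γ : Γ) :
    (fun g => u (γ * g)) ∈ finiteRange Γ T :=
  Set.Finite.subset hu (by rintro _ ⟨g, rfl⟩; exact ⟨γ * g, rfl⟩)

lemma indicatorHom_mem_finiteRange {X : Type*} (F : Set X) (t : T) :
    indicatorHom T F t ∈ finiteRange X T := by
  refine Set.Finite.subset (Set.toFinite {t, 1}) ?_
  rintro _ ⟨g, rfl⟩
  by_cases h : g ∈ F
  · exact Or.inl (indicatorHom_of_mem h t)
  · exact Or.inr (indicatorHom_of_notMem h t)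

lemma countable_closure {G : Type*} [Group G] {E : Set G} (hE : E.Countable) :
    Countable (Subgroup.closure E) := by
  have := hE.to_subtype
  rw [← Subtype.range_coe (s := E), ← FreeGroup.range_lift_eq_closure]
  have : Countable (FreeGroup E) := Quotient.countable
  exact (MonoidHom.rangeRestrict_surjective _).countable

/-- A countable torsion group embeds into a countable torsion group generated by elements of order
dividing three, and into its commutator subgroup if it already was generated by such elements. -/
theorem exists_embedding_cube_generated (T : Type) [Group T] [Countable T] (hT : IsMulTorsion T) :
    ∃ (S : Type) (_ : Group S) (ι : T →* S), Countable S ∧ IsMulTorsion S ∧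
      Function.Injective ι ∧ Subgroup.closure {s : S | s ^ 3 = 1} = ⊤ ∧
      (Subgroup.closure {t : T | t ^ 3 = 1} = ⊤ → ι.range ≤ commutator S) := by
  classical
  obtain ⟨w, hw⟩ := exists_injective_walk GuptaSidki.gen GuptaSidki.closure_range_gen fun j =>
    GuptaSidki.isMulTorsion _
  let Φ : Bool → T →* T ≀ᵣ GuptaSidki := fun c =>
    base.comp (indicatorHom T (stepSet GuptaSidki.gen w c))
  let γ : Bool → T ≀ᵣ GuptaSidki := fun c => inl (GuptaSidki.gen c)
  have hγ : ∀ c, γ c ^ 3 = 1 := fun c => by rw [← map_pow, GuptaSidki.gen_pow_three, map_one]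
  let E : Set (T ≀ᵣ GuptaSidki) := Set.range γ ∪
    (Set.range (fun p : Bool × T => Φ p.1 p.2 * γ p.1 * (Φ p.1 p.2)⁻¹) ∪
      ⋃ c, Φ c '' {t | t ^ 3 = 1})
  have hE3 : ∀ q ∈ E, q ^ 3 = 1 := by
    rintro q (⟨c, rfl⟩ | ⟨p, rfl⟩ | hq)
    · exact hγ c
    · simp only [conj_pow, hγ, mul_one, mul_inv_cancel]
    · obtain ⟨c, t, ht, rfl⟩ := Set.mem_iUnion.1 hq
      rw [← map_pow, ht, map_one]
  have hE : E.Countable := (Set.countable_range _).union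
    ((Set.countable_range _).union (Set.countable_iUnion fun c => (Set.to_countable _).image _))
  let S := Subgroup.closure E
  have hγS : ∀ c, γ c ∈ S := fun c => Subgroup.subset_closure (Or.inl ⟨c, rfl⟩)
  have hcommS : ∀ c t, ⁅Φ c t, γ c⁆ ∈ S := fun c t =>
    mul_mem (Subgroup.subset_closure (Or.inr (Or.inl ⟨(c, t), rfl⟩))) (inv_mem (hγS c))
  have hsingle : ∀ t, baseSingle T GuptaSidki t =
      ⁅Φ true t, γ true⁆ * ⁅Φ false t, γ false⁆ := baseSingle_eq_mul_commutator hw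
  refine ⟨S, inferInstance, (baseSingle T GuptaSidki).codRestrict S fun t => ?_,
    countable_closure hE, fun q => ?_, fun s t hst => ?_, ?_, ?_⟩
  · rw [hsingle]
    exact mul_mem (hcommS true t) (hcommS false t)
  · have hle : S ≤ ofInvariant (finiteRange GuptaSidki T) finiteRange_invariant := by
      have hΦ : ∀ c t, Φ c t ∈ ofInvariant (finiteRange GuptaSidki T) finiteRange_invariant :=
        fun c t => indicatorHom_mem_finiteRange _ t
      have hγ' : ∀ c, γ c ∈ ofInvariant (finiteRange GuptaSidki T) finiteRange_invariant :=
        fun c => one_mem (finiteRange GuptaSidki T)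
      refine (Subgroup.closure_le _).2 ?_
      rintro q (⟨c, rfl⟩ | ⟨p, rfl⟩ | hq)
      · exact hγ' c
      · exact mul_mem (mul_mem (hΦ _ _) (hγ' _)) (inv_mem (hΦ _ _))
      · obtain ⟨c, t, -, rfl⟩ := Set.mem_iUnion.1 hq
        exact hΦ c t
    refine Submonoid.isOfFinOrder_coe.1
      (isOfFinOrder_of_mem_ofInvariant GuptaSidki.isMulTorsion (fun u hu => ?_) (hle q.2))
    exact isOfFinOrder_of_finite_range_pow hT one_pos (by rwa [pow_one])
  · exact baseSingle_injective (congrArg Subtype.val hst)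
  · refine top_unique ((Subgroup.closure_closure_coe_preimage (k := E)).ge.trans
      (Subgroup.closure_mono fun q hq => ?_))
    exact Subtype.ext (hE3 q hq)
  · rintro h3 _ ⟨t, rfl⟩
    have hΦS : ∀ c t, Φ c t ∈ S := fun c t => by
      have : Subgroup.closure {t : T | t ^ 3 = 1} ≤ S.comap (Φ c) :=
        (Subgroup.closure_le _).2 fun t ht =>
          Subgroup.subset_closure (Or.inr (Or.inr (Set.mem_iUnion.2 ⟨c, t, ht, rfl⟩)))
      exact this (h3 ▸ Subgroup.mem_top t)
    have hmem : ∀ c, ⁅(⟨Φ c t, hΦS c t⟩ : S), ⟨γ c, hγS c⟩⁆ ∈ commutator S := fun c =>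
      Subgroup.commutator_mem_commutator (Subgroup.mem_top _) (Subgroup.mem_top _)
    have heq : (baseSingle T GuptaSidki).codRestrict S (fun t => by
        rw [hsingle]; exact mul_mem (hcommS true t) (hcommS false t)) t =
        ⁅(⟨Φ true t, hΦS true t⟩ : S), ⟨γ true, hγS true⟩⁆ *
          ⁅(⟨Φ false t, hΦS false t⟩ : S), ⟨γ false, hγS false⟩⁆ := Subtype.ext (hsingle t)
    rw [heq]
    exact mul_mem (hmem true) (hmem false)

end Swindle

lemma sparseWreath_closure {I J Γ S : Type*} [Group Γ] [Group S] (ψ : J → Γ) (x : I → Γ)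
    (t : I → S) : ∃ q : Option J → sparseWreath ψ x t,
      (∀ j, (q j : S ≀ᵣ Γ) = sparseGen ψ x t j) ∧ Subgroup.closure (Set.range q) = ⊤ := by
  refine ⟨fun j => ⟨_, Subgroup.subset_closure ⟨j, rfl⟩⟩, fun j => rfl, ?_⟩
  have : (Set.range fun j => (⟨sparseGen ψ x t j, Subgroup.subset_closure ⟨j, rfl⟩⟩ :
      sparseWreath ψ x t)) = (↑) ⁻¹' Set.range (sparseGen ψ x t) := by
    ext q
    simp [Subtype.ext_iff]
  rw [this]
  exact Subgroup.closure_closure_coe_preimage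

lemma MonoidHom.map_commutator_le {G H : Type*} [Group G] [Group H] (f : G →* H) :
    (commutator G).map f ≤ commutator H := by
  rw [commutator_def, commutator_def, Subgroup.map_commutator]
  exact Subgroup.commutator_mono le_top le_top

/-- A countable torsion group embeds into the commutator subgroup of a torsion group generated by
three elements of order dividing three. -/
theorem exists_embedding_three_generated (T : Type) [Group T] [Countable T] (hT : IsMulTorsion T) :
    ∃ (Q : Type) (_ : Group Q) (q : Option Bool → Q) (ι : T →* Q), IsMulTorsion Q ∧
      Subgroup.closure (Set.range q) = ⊤ ∧ (∀ i, q i ^ 3 = 1) ∧ Function.Injective ι ∧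
      ι.range ≤ commutator Q := by
  obtain ⟨S₁, _, ι₁, _, hS₁, hι₁, hgen₁, -⟩ := exists_embedding_cube_generated T hT
  obtain ⟨S₂, _, ι₂, _, hS₂, hι₂, hgen₂, hcomm₂⟩ := exists_embedding_cube_generated S₁ hS₁
  obtain ⟨S₃, _, ι₃, _, hS₃, hι₃, hgen₃, hcomm₃⟩ := exists_embedding_cube_generated S₂ hS₂
  obtain ⟨x, hx⟩ := exists_isSidon (Γ := GuptaSidki) fun g =>
    (GuptaSidki.exists_pow_eq_one g).imp' (3 ^ ·) fun m hm => ⟨Odd.pow (by decide), hm⟩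
  obtain ⟨t, ht⟩ := (Set.to_countable {s : S₃ | s ^ 3 = 1}).exists_eq_range ⟨1, one_pow 3⟩
  have ht3 : ∀ i, t i ^ 3 = 1 := fun i => ht.ge ⟨i, rfl⟩
  obtain ⟨f, hf⟩ := exists_embedding_sparseWreath hx GuptaSidki.closure_range_gen (ht ▸ hgen₃)
    ι₃ hι₃ (hcomm₃ hgen₂)
  obtain ⟨q, hq, hqtop⟩ := sparseWreath_closure GuptaSidki.gen x t
  refine ⟨sparseWreath GuptaSidki.gen x t, inferInstance, q, f.comp (ι₂.comp ι₁),
    isMulTorsion_sparseWreath GuptaSidki.isMulTorsion hS₃ hx three_pos ht3 _, hqtop,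
    fun i => Subtype.ext ?_, hf.comp (hι₂.comp hι₁), ?_⟩
  · rw [Subgroup.coe_pow, hq]
    rcases i with _ | c
    · rw [sparseGen, ← map_pow, show sparse x t ^ 3 = 1 from funext (sparse_pow ht3), map_one]
      rfl
    · rw [sparseGen, ← map_pow, GuptaSidki.gen_pow_three, map_one]
      rfl
  · rintro _ ⟨s, rfl⟩
    exact f.map_commutator_le ⟨_, hcomm₂ hgen₁ ⟨_, rfl⟩, rfl⟩

/-- Positions of a perfect difference set modulo seven. -/
def differenceSet : Option Bool → Multiplicative (ZMod 7)
  | none => Multiplicative.ofAdd 0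
  | some true => Multiplicative.ofAdd 1
  | some false => Multiplicative.ofAdd 3

lemma isSidon_differenceSet : IsSidon differenceSet := by
  unfold IsSidon
  decide

/-- Every countable torsion group embeds into a torsion group generated by two elements. -/
theorem countable_torsion_group_embeds_in_two_generated_torsion_group
    (T : Type) [Group T] [Countable T] (hT : Monoid.IsTorsion T) :
    ∃ (Q : Type) (_ : Group Q) (q₁ q₂ : Q), Monoid.IsTorsion Q ∧
      Subgroup.closure {q₁, q₂} = ⊤ ∧ ∃ f : T →* Q, Function.Injective f := by
  obtain ⟨S, _, t, ι, hS, ht, ht3, hι, hcomm⟩ := exists_embedding_three_generated T hT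
  let ψ : Unit → Multiplicative (ZMod 7) := fun _ => Multiplicative.ofAdd 1
  have hψ : Subgroup.closure (Set.range ψ) = ⊤ := by
    rw [Set.range_const, ← Subgroup.zpowers_eq_closure, eq_top_iff]
    have hpow : ∀ g : Multiplicative (ZMod 7),
        (Multiplicative.ofAdd 1 : Multiplicative (ZMod 7)) ^ g.toAdd.val = g := by decide
    exact fun g _ => Subgroup.mem_zpowers_iff.2 ⟨g.toAdd.val, (zpow_natCast _ _).trans (hpow g)⟩
  obtain ⟨q, -, hq⟩ := sparseWreath_closure ψ differenceSet t
  refine ⟨sparseWreath ψ differenceSet t, inferInstance, q none, q (some ()),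
    isMulTorsion_sparseWreath isMulTorsion_of_finite hS isSidon_differenceSet three_pos ht3 ψ, ?_,
    exists_embedding_sparseWreath isSidon_differenceSet hψ ht ι hι hcomm⟩
  rw [← hq]
  congr 1
  ext g
  simp [Option.exists, Unique.exists_iff, eq_comm]
end
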